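/- arXiv:2012.07568 — 2 statements merged into one kernel-verified Lean document; each statement's English description precedes it below -/
import Mathlib

section
/- Let n > m ≥ 1 be integers and ε₁, ε₂ ∈ {−1, +1}, and set f(X) = X^n + ε₁·X^m + 4·ε₂ ∈ ℤ[X]. Assume there is no positive integer k such that (n = 3k, m = 2k, ε₂ = ε₁), or (n = 5k, m = 2k, ε₂ = −ε₁), or (n = 11k, m = 4k, ε₂ = ε₁). Then f is irreducible in ℤ[X]. -/
/-!
All complex roots of `f = X ^ n + ε₁ X ^ m + 4 ε₂` have modulus greater than `1`, so if `f = g * h`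
with nonconstant monic factors, then `g` and `h` have constant coefficients `±2`. Modulo `4` this
forces the first odd coefficients of `g` and of `h` to have the same index `r`, and so `m = 2 * r`.

Following Ljunggren, put `P = ± g * h.mirror`, so that `P * P.mirror = f * f.mirror`. For a suitable
sign `e`, this says that the coefficients `zₖ = (tₖ, dₖ)` of `P + e * P.mirror` and
`P - e * P.mirror` satisfy a convolution identity for the form `d² - t²`, with almost all terms on
the right equal to `0`, and its middle coefficient bounds `∑ (tₖ² + dₖ²)` by an absolute constant.
Comparing the identity `2`-adically at successive indices shows that `z` vanishes off the
multiples of `r`, or of `r / 2`. After rescaling, `z` is a sequence of bounded norm starting at a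
known place, and a finite search leaves only `n / r = 3`, `5` and `11 / 2`.
-/

open Polynomial

/-- The indefinite bilinear form polarising `d² - t²` on pairs `(t, d)`. -/
def hyperbolicForm (x y : ℤ × ℤ) : ℤ := x.2 * y.2 - x.1 * y.1

/-- The `p`-th coefficient of the square of `∑ zₖ Xᵏ` with respect to `hyperbolicForm`, without the
two terms that involve `z₀`. -/
def innerConv (z : ℕ → ℤ × ℤ) (p : ℕ) : ℤ :=
  ∑ k ∈ Finset.Ioo 0 p, hyperbolicForm (z k) (z (p - k))

lemma hyperbolicForm_comm (x y : ℤ × ℤ) : hyperbolicForm x y = hyperbolicForm y x := by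
  simp only [hyperbolicForm, mul_comm]

lemma hyperbolicForm_eq_zero {x y : ℤ × ℤ} (h : x = 0 ∨ y = 0) : hyperbolicForm x y = 0 := by
  rcases h with rfl | rfl <;> simp [hyperbolicForm]

lemma sum_eq_sum_lower_half_add_center {M : Type*} [AddCommMonoid M] (s : Finset ℕ) (f : ℕ → M)
    (n : ℕ) (hs : ∀ k ∈ s, k ≤ n ∧ n - k ∈ s) :
    ∑ k ∈ s, f k = ∑ k ∈ s with 2 * k < n, (f k + f (n - k)) + ∑ k ∈ s with 2 * k = n, f k := by
  have hupper : ∑ k ∈ s with n < 2 * k, f k = ∑ k ∈ s with 2 * k < n, f (n - k) := by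
    refine Finset.sum_nbij' (n - ·) (n - ·) ?_ ?_ ?_ ?_ ?_ <;> intro k hk <;>
      simp only [Finset.mem_filter] at hk ⊢ <;> have := hs k hk.1
    · exact ⟨this.2, by omega⟩
    · exact ⟨this.2, by omega⟩
    · omega
    · omega
    · rw [Nat.sub_sub_self this.1]
  rw [Finset.sum_add_distrib, ← hupper, ← Finset.sum_filter_add_sum_filter_not s (2 * · < n),
    ← Finset.sum_filter_add_sum_filter_not (s.filter (¬ 2 * · < n)) (n < 2 * ·), add_assoc,
    Finset.filter_filter, Finset.filter_filter]
  congr! 5 <;> grind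

lemma innerConv_eq_lower_half_add_center (z : ℕ → ℤ × ℤ) (p : ℕ) :
    innerConv z p = 2 * ∑ k ∈ Finset.Ioo 0 p with 2 * k < p, hyperbolicForm (z k) (z (p - k))
      + ∑ k ∈ Finset.Ioo 0 p with 2 * k = p, hyperbolicForm (z k) (z (p - k)) := by
  rw [innerConv, sum_eq_sum_lower_half_add_center _ _ p
    (fun k hk => by simp only [Finset.mem_Ioo] at hk ⊢; omega), Finset.mul_sum]
  congr 1
  refine Finset.sum_congr rfl fun k hk => ?_
  simp only [Finset.mem_filter, Finset.mem_Ioo] at hk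
  rw [Nat.sub_sub_self hk.1.2.le, hyperbolicForm_comm (z (p - k)), two_mul]

section

variable {z : ℕ → ℤ × ℤ} {p : ℕ}

lemma innerConv_eq_two_mul_sum_add_center (s : Finset ℕ) (hs : ∀ k ∈ s, 0 < k ∧ 2 * k < p)
    (hoff : ∀ k, 0 < k → 2 * k < p → k ∉ s → z k = 0 ∨ z (p - k) = 0) :
    innerConv z p = 2 * ∑ k ∈ s, hyperbolicForm (z k) (z (p - k))
      + ∑ k ∈ Finset.Ioo 0 p with 2 * k = p, hyperbolicForm (z k) (z (p - k)) := by
  rw [innerConv_eq_lower_half_add_center]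
  congr 2
  refine (Finset.sum_subset (fun k hk => ?_) fun k hk hks => ?_).symm
  · have := hs k hk
    simp only [Finset.mem_filter, Finset.mem_Ioo]
    omega
  · simp only [Finset.mem_filter, Finset.mem_Ioo] at hk
    exact hyperbolicForm_eq_zero (hoff k hk.1.1 hk.2 hks)

lemma eight_dvd_innerConv_sub (s : Finset ℕ) (hs : ∀ k ∈ s, 0 < k ∧ 2 * k < p)
    (hoff : ∀ k, 0 < k → 2 * k < p → k ∉ s → 4 ∣ hyperbolicForm (z k) (z (p - k)))
    (hcenter : ∀ k, 2 * k = p → z k = 0) :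
    8 ∣ innerConv z p - 2 * ∑ k ∈ s, hyperbolicForm (z k) (z (p - k)) := by
  have hsub : s ⊆ (Finset.Ioo 0 p).filter (2 * · < p) := fun k hk => by
    have := hs k hk
    simp only [Finset.mem_filter, Finset.mem_Ioo]
    omega
  have hzero : ∑ k ∈ Finset.Ioo 0 p with 2 * k = p, hyperbolicForm (z k) (z (p - k)) = 0 :=
    Finset.sum_eq_zero fun k hk =>
      hyperbolicForm_eq_zero (Or.inl (hcenter k (Finset.mem_filter.1 hk).2))
  rw [innerConv_eq_lower_half_add_center, hzero, add_zero, ← mul_sub,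
    ← Finset.sum_sdiff_eq_sub hsub, show (8 : ℤ) = 2 * 4 by norm_num]
  refine mul_dvd_mul_left 2 (Finset.dvd_sum fun k hk => ?_)
  simp only [Finset.mem_sdiff, Finset.mem_filter, Finset.mem_Ioo] at hk
  exact hoff k hk.1.1.1 hk.1.2 hk.2

lemma innerConv_eq_two_mul_sum (s : Finset ℕ) (hs : ∀ k ∈ s, 0 < k ∧ 2 * k < p)
    (hoff : ∀ k, 0 < k → 2 * k ≤ p → k ∉ s → z k = 0 ∨ z (p - k) = 0) :
    innerConv z p = 2 * ∑ k ∈ s, hyperbolicForm (z k) (z (p - k)) := by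
  rw [innerConv_eq_two_mul_sum_add_center s hs fun k h₀ h₂ => hoff k h₀ h₂.le,
    add_eq_left]
  refine Finset.sum_eq_zero fun k hk => ?_
  simp only [Finset.mem_filter, Finset.mem_Ioo] at hk
  exact hyperbolicForm_eq_zero (hoff k hk.1.1 hk.2.le fun h => by have := hs k h; omega)

lemma innerConv_eq_zero (hoff : ∀ k, 0 < k → 2 * k ≤ p → z k = 0 ∨ z (p - k) = 0) :
    innerConv z p = 0 := by
  rw [innerConv_eq_two_mul_sum ∅ (by simp) fun k h₀ h₂ _ => hoff k h₀ h₂]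
  simp

lemma innerConv_add {a b : ℕ} (ha : 0 < a) (hab : a < b)
    (hoff : ∀ k, 0 < k → 2 * k ≤ a + b → k ≠ a → z k = 0 ∨ z (a + b - k) = 0) :
    innerConv z (a + b) = 2 * hyperbolicForm (z a) (z b) := by
  rw [innerConv_eq_two_mul_sum {a} (by simp; omega) (by simpa using hoff)]
  simp

lemma innerConv_two_mul {q : ℕ} (hq : 0 < q) (s : Finset ℕ) (hs : ∀ k ∈ s, 0 < k ∧ k < q)
    (hoff : ∀ k, 0 < k → k < q → k ∉ s → z k = 0 ∨ z (2 * q - k) = 0) :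
    innerConv z (2 * q)
      = 2 * ∑ k ∈ s, hyperbolicForm (z k) (z (2 * q - k)) + hyperbolicForm (z q) (z q) := by
  rw [innerConv_eq_two_mul_sum_add_center s (fun k hk => by have := hs k hk; omega)
    fun k h₀ h₂ => hoff k h₀ (by omega)]
  congr 1
  rw [Finset.sum_eq_single_of_mem q (by simp; omega)]
  · rw [two_mul, Nat.add_sub_cancel]
  · simp only [Finset.mem_filter, Finset.mem_Ioo]
    omega

lemma innerConv_two_mul_self {q : ℕ} (hq : 0 < q)
    (hoff : ∀ k, 0 < k → k < q → z k = 0 ∨ z (2 * q - k) = 0) :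
    innerConv z (2 * q) = hyperbolicForm (z q) (z q) := by
  rw [innerConv_two_mul hq ∅ (by simp) fun k h₀ h₁ _ => hoff k h₀ h₁]
  simp

lemma innerConv_add_mul {ρ e j : ℕ} (hρ : 0 < ρ) (he : ¬ ρ ∣ e)
    (hlow : ∀ k, 0 < k → k < e → z k ≠ 0 → ρ ∣ k) (hj : j * ρ < e) :
    innerConv z (e + j * ρ)
      = 2 * ∑ i ∈ Finset.range j,
          hyperbolicForm (z ((i + 1) * ρ)) (z (e + (j - (i + 1)) * ρ)) := by
  have hle : ∀ i ∈ Finset.range j, ρ ≤ (i + 1) * ρ ∧ (i + 1) * ρ ≤ j * ρ := fun i hi =>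
    ⟨Nat.le_mul_of_pos_left _ i.succ_pos, Nat.mul_le_mul_right _ (Finset.mem_range.1 hi)⟩
  rw [innerConv_eq_two_mul_sum ((Finset.range j).image fun i => (i + 1) * ρ), Finset.sum_image
    fun _ _ _ _ hab => Nat.succ_injective (Nat.eq_of_mul_eq_mul_right hρ hab)]
  · congr 1
    refine Finset.sum_congr rfl fun i hi => ?_
    rw [Nat.sub_mul, Nat.add_sub_assoc (hle i hi).2]
  · simp only [Finset.forall_mem_image]
    intro i hi
    have := hle i hi
    omega
  · intro k h₀ hk hks
    by_contra! hne
    obtain ⟨i, rfl⟩ := exists_eq_mul_left_of_dvd (hlow k h₀ (by omega) hne.1)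
    have hij : j < i := by
      by_contra! hij
      have hi := Nat.pos_of_mul_pos_right h₀
      exact hks (Finset.mem_image.2 ⟨i - 1, Finset.mem_range.2 (by omega), by
        rw [Nat.sub_add_cancel hi]⟩)
    have hji : j * ρ + ρ ≤ i * ρ := by rw [← Nat.succ_mul]; exact Nat.mul_le_mul_right _ hij
    have hdvd := hlow _ (by omega) (by omega) hne.2
    rw [Nat.dvd_sub_iff_left (by omega) (Nat.dvd_mul_left ρ i), Nat.dvd_add_left
      (Nat.dvd_mul_left ρ j)] at hdvd
    exact he hdvd

end

/-- The squared Euclidean length. -/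
def weight (x : ℤ × ℤ) : ℤ := x.1 ^ 2 + x.2 ^ 2

lemma weight_nonneg (x : ℤ × ℤ) : 0 ≤ weight x := by
  unfold weight
  positivity

lemma eq_zero_of_weight_nonpos {x : ℤ × ℤ} (h : weight x ≤ 0) : x = 0 := by
  unfold weight at h
  ext <;> simp only [Prod.fst_zero, Prod.snd_zero] <;> nlinarith [sq_nonneg x.1, sq_nonneg x.2]

/-- The coefficients `zₖ = (tₖ, dₖ)` of `T = P + Q` and `D = P - Q`, where `P = ± g * h.mirror`,
`Q = ± g.mirror * h` and `g * h = X ^ n + ε₁ X ^ (2 * r) + 4 ε₂`, the signs being chosen so that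
`P` and `Q` have constant coefficient `2`; here `ε = ε₁ ε₂` and `η = ε₁`. The fields `conv_eq` and
`norm` compare coefficients in `T ^ 2 - D ^ 2 = 4 P Q`, while `low` and `ord` say that the first odd
coefficients of `P` and `Q` have index `r`. -/
structure ReciprocalSystem (n r : ℕ) (ε η : ℤ) (z : ℕ → ℤ × ℤ) : Prop where
  r_pos : 0 < r
  two_mul_lt : 2 * r < n
  sign_ε : ε = 1 ∨ ε = -1
  sign_η : η = 1 ∨ η = -1
  zero : z 0 = (4, 0)
  fst_mirror : ∀ {j k}, j + k = n → (z j).1 = ε * η * (z k).1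
  snd_mirror : ∀ {j k}, j + k = n → (z j).2 = -(ε * η) * (z k).2
  conv_eq : ∀ {p}, 0 < p → p < n → 8 * (z p).1 = innerConv z p
    + (if p = 2 * r then 4 * ε else 0) + (if p + 2 * r = n then 16 * η else 0)
  norm : ∑ k ∈ Finset.Ioo 0 n, weight (z k) = 40
  parity : ∀ k, 2 ∣ (z k).1 + (z k).2
  low : ∀ {p}, 0 < p → p < r → 4 ∣ (z p).1 + (z p).2
  ord : 2 ∣ (z r).1 ∧ ¬ 4 ∣ (z r).1 + (z r).2

namespace ReciprocalSystem

variable {n r : ℕ} {ε η : ℤ} {z : ℕ → ℤ × ℤ}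

lemma sign_mul (h : ReciprocalSystem n r ε η z) : ε * η = 1 ∨ ε * η = -1 := by
  rcases h.sign_ε with rfl | rfl <;> rcases h.sign_η with rfl | rfl <;> simp

lemma eq_zero_mirror (h : ReciprocalSystem n r ε η z) {j k : ℕ} (hjk : j + k = n) (hk : z k = 0) :
    z j = 0 := by
  ext
  · rw [h.fst_mirror hjk, hk]; simp
  · rw [h.snd_mirror hjk, hk]; simp

lemma z_r_ne_zero (h : ReciprocalSystem n r ε η z) : z r ≠ 0 := fun hr => by
  have := h.ord.2
  simp [hr] at this

lemma fst_eq (h : ReciprocalSystem n r ε η z) {p : ℕ} (h₀ : 0 < p) (hn : p < n)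
    (hr : p ≠ 2 * r) (hd : p + 2 * r ≠ n) : 8 * (z p).1 = innerConv z p := by
  rw [h.conv_eq h₀ hn, if_neg hr, if_neg hd, add_zero, add_zero]

lemma exists_fst_eq (h : ReciprocalSystem n r ε η z) {p : ℕ} (h₀ : 0 < p) (hn : p < n)
    (hr : p ≠ 2 * r) : ∃ c, 8 * (z p).1 = innerConv z p + 16 * c := by
  rw [h.conv_eq h₀ hn, if_neg hr, add_zero]
  split_ifs
  exacts [⟨η, rfl⟩, ⟨0, rfl⟩]

lemma weight_mirror (h : ReciprocalSystem n r ε η z) {j k : ℕ} (hjk : j + k = n) :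
    weight (z j) = weight (z k) := by
  rw [weight, weight, h.fst_mirror hjk, h.snd_mirror hjk]
  rcases h.sign_mul with e | e <;> simp [e]

lemma two_mul_sum_weight_add_center (h : ReciprocalSystem n r ε η z) :
    2 * ∑ k ∈ Finset.Ioo 0 n with 2 * k < n, weight (z k)
      + ∑ k ∈ Finset.Ioo 0 n with 2 * k = n, weight (z k) = 40 := by
  rw [← h.norm, sum_eq_sum_lower_half_add_center (Finset.Ioo 0 n) _ n
    (fun k hk => by simp only [Finset.mem_Ioo] at hk ⊢; omega), Finset.mul_sum]
  congr 1
  refine Finset.sum_congr rfl fun k hk => ?_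
  simp only [Finset.mem_filter, Finset.mem_Ioo] at hk
  rw [h.weight_mirror (Nat.sub_add_cancel hk.1.2.le), two_mul]

lemma sum_weight_le (h : ReciprocalSystem n r ε η z) {s : Finset ℕ}
    (hs : s ⊆ Finset.Ioo 0 n) : ∑ k ∈ s, weight (z k) ≤ 40 :=
  h.norm ▸ Finset.sum_le_sum_of_subset_of_nonneg hs fun _ _ _ => weight_nonneg _

lemma sum_lower_half_weight_le (h : ReciprocalSystem n r ε η z) {s : Finset ℕ}
    (hs : ∀ k ∈ s, 0 < k ∧ 2 * k < n) : ∑ k ∈ s, weight (z k) ≤ 20 := by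
  have hsub : ∑ k ∈ s, weight (z k) ≤ ∑ k ∈ Finset.Ioo 0 n with 2 * k < n, weight (z k) := by
    refine Finset.sum_le_sum_of_subset_of_nonneg (fun k hk => ?_) fun k _ _ => weight_nonneg _
    have := hs k hk
    simp only [Finset.mem_filter, Finset.mem_Ioo]
    omega
  have hcenter : 0 ≤ ∑ k ∈ Finset.Ioo 0 n with 2 * k = n, weight (z k) :=
    Finset.sum_nonneg fun k _ => weight_nonneg _
  have := h.two_mul_sum_weight_add_center
  omega

lemma exists_two_mul_sum_weight_add_sq (h : ReciprocalSystem n r ε η z) (s : Finset ℕ)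
    (hs : ∀ k ∈ s, 0 < k ∧ 2 * k < n) (hoff : ∀ k, 0 < k → 2 * k < n → k ∉ s → z k = 0) :
    ∃ x : ℤ, 2 * ∑ k ∈ s, weight (z k) + x ^ 2 = 40 := by
  have hcenter : ∃ x : ℤ, ∑ k ∈ Finset.Ioo 0 n with 2 * k = n, weight (z k) = x ^ 2 := by
    by_cases hn : ∃ c, 0 < c ∧ 2 * c = n
    · obtain ⟨c, hc, hcn⟩ := hn
      rw [Finset.sum_eq_single_of_mem c (by simp; omega) fun k hk hkc => by
        simp only [Finset.mem_filter] at hk; omega, weight]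
      have ht := h.fst_mirror (j := c) (k := c) (by omega)
      have hd := h.snd_mirror (j := c) (k := c) (by omega)
      rcases h.sign_mul with e | e <;> rw [e] at ht hd
      · exact ⟨(z c).1, by rw [show (z c).2 = 0 by omega]; ring⟩
      · exact ⟨(z c).2, by rw [show (z c).1 = 0 by omega]; ring⟩
    · refine ⟨0, (Finset.sum_eq_zero fun k hk => ?_).trans (by norm_num)⟩
      simp only [Finset.mem_filter, Finset.mem_Ioo] at hk
      exact (hn ⟨k, hk.1.1, hk.2⟩).elim
  obtain ⟨x, hx⟩ := hcenter
  refine ⟨x, ?_⟩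
  rw [← hx, ← h.two_mul_sum_weight_add_center]
  congr 2
  refine Finset.sum_subset (fun k hk => ?_) fun k hk hks => ?_
  · have := hs k hk
    simp only [Finset.mem_filter, Finset.mem_Ioo]
    omega
  · simp only [Finset.mem_filter, Finset.mem_Ioo] at hk
    rw [hoff k hk.1.1 hk.2 hks]
    rfl

lemma four_le_weight_r (h : ReciprocalSystem n r ε η z) : 4 ≤ weight (z r) := by
  obtain ⟨⟨a, ha⟩, h4⟩ := h.ord
  obtain ⟨b, hb⟩ := h.parity r
  have hd : (z r).2 = 2 * (b - a) := by omega
  have : a ≠ 0 ∨ b - a ≠ 0 := by omega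
  rw [weight, ha, hd]
  rcases this with e | e <;> nlinarith [sq_nonneg a, sq_nonneg (b - a), sq_pos_of_ne_zero e]

lemma eq_zero_or_eq_zero {S : ℕ → Prop} (hS : ∀ k, 0 < k → k < n → z k ≠ 0 → S k) {j k : ℕ}
    (hj : 0 < j ∧ j < n) (hk : 0 < k ∧ k < n) (hjk : S j → S k → False) :
    z j = 0 ∨ z k = 0 := by
  by_contra! hne
  exact hjk (hS j hj.1 hj.2 hne.1) (hS k hk.1 hk.2 hne.2)

section LargeNullIndex

variable {i : ℕ}

lemma snd_of_large (h : ReciprocalSystem n r ε η z) (hi : 0 < i) (hin : 2 * i < n)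
    (ht : (z i).1 = 0) (hd : ¬ ((z i).2 = 0 ∨ (z i).2 = 2 ∨ (z i).2 = -2)) :
    i ≠ r ∧ ((z i).2 = 4 ∨ (z i).2 = -4) := by
  have hr := h.r_pos
  have hrn := h.two_mul_lt
  have hpar := h.parity i
  have hle : (z i).2 ^ 2 ≤ 20 := by
    simpa [weight, ht] using h.sum_lower_half_weight_le (s := {i}) (by simp; omega)
  have hlt : (z i).2 < 5 := by nlinarith
  have hgt : -5 < (z i).2 := by nlinarith
  refine ⟨?_, by omega⟩
  rintro rfl
  have := h.ord.2
  omega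

lemma support_of_large (h : ReciprocalSystem n r ε η z) (hi : 0 < i) (hin : 2 * i < n)
    (hir : i ≠ r) (hd : (z i).2 = 4 ∨ (z i).2 = -4) :
    weight (z r) = 4 ∧
      ∀ k, 0 < k → k < n → z k ≠ 0 → k = i ∨ k + i = n ∨ k = r ∨ k + r = n := by
  have hr := h.r_pos
  have hrn := h.two_mul_lt
  have hwr := h.four_le_weight_r
  have hwi : 16 ≤ weight (z i) := by
    unfold weight
    rcases hd with e | e <;> rw [e] <;> linarith [sq_nonneg (z i).1]
  have hmi := h.weight_mirror (j := n - i) (k := i) (by omega)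
  have hmr := h.weight_mirror (j := n - r) (k := r) (by omega)
  have hmem : ∀ k ∈ ({i, n - i, r, n - r} : Finset ℕ), 0 < k ∧ k < n := by simp; omega
  have hsum : ∑ k ∈ ({i, n - i, r, n - r} : Finset ℕ), weight (z k)
      = 2 * weight (z i) + 2 * weight (z r) := by
    rw [Finset.sum_insert (by simp; omega), Finset.sum_insert (by simp; omega),
      Finset.sum_pair (by omega), hmi, hmr]
    ring
  refine ⟨?_, fun k h₀ hn hk => ?_⟩
  · have := h.sum_weight_le fun k hk => Finset.mem_Ioo.2 (hmem k hk)
    omega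
  · by_contra hks
    have hle := h.sum_weight_le (s := insert k {i, n - i, r, n - r})
      (Finset.insert_subset (by simp; omega) fun k hk => Finset.mem_Ioo.2 (hmem k hk))
    rw [Finset.sum_insert (by simp; omega), hsum] at hle
    exact hk (eq_zero_of_weight_nonpos (by omega))

variable (hi : 0 < i) (hin : 2 * i < n)
  (hS : ∀ k, 0 < k → k < n → z k ≠ 0 → k = i ∨ k + i = n ∨ k = r ∨ k + r = n)

include hi hin hS

lemma eq_five_mul_of_large_of_fst_eq_zero (h : ReciprocalSystem n r ε η z) (hir : i ≠ r)
    (hd : (z i).2 = 4 ∨ (z i).2 = -4)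
    (hT : ∀ k, 0 < k → k < n → (z k).1 = 0) (hdr : (z r).2 = 2 ∨ (z r).2 = -2) :
    n = 5 * r ∧ ε = -1 := by
  have hr := h.r_pos
  have hrn := h.two_mul_lt
  have hsup {j k} := eq_zero_or_eq_zero (n := n) (z := z) hS (j := j) (k := k)
  have Er := h.conv_eq (p := 2 * r) (by omega) (by omega)
  have Ei := h.conv_eq (p := 2 * i) (by omega) (by omega)
  have Eir := h.conv_eq (p := i + r) (by omega) (by omega)
  rw [hT _ (by omega) (by omega)] at Er Ei Eir
  rcases hir.lt_or_gt with hlt | hgt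
  · rw [innerConv_two_mul_self hi fun k _ _ => hsup (by omega) (by omega) (by omega)] at Ei
    rw [innerConv_add hi hlt fun k _ _ _ => hsup (by omega) (by omega) (by omega)] at Eir
    simp only [hyperbolicForm, hT i hi (by omega), hT r hr (by omega)] at Ei Eir
    rcases hd with e | e <;> rcases hdr with e' | e' <;> rw [e] at Ei Eir <;> rw [e'] at Eir <;>
      grind
  · rw [innerConv_two_mul_self hr fun k _ _ => hsup (by omega) (by omega) (by omega)] at Er
    rw [add_comm i, innerConv_add hr hgt fun k _ _ _ => hsup (by omega) (by omega) (by omega)]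
      at Eir
    by_cases hi2 : i = 2 * r
    · simp only [hyperbolicForm, hT i hi (by omega), hT r hr (by omega)] at Er Eir
      rcases h.sign_ε with f | f <;> rcases hd with e | e <;> rcases hdr with e' | e' <;>
        rw [e'] at Er Eir <;> rw [e] at Eir <;> grind
    · exfalso
      by_cases hn : n = 3 * r + i
      · rw [innerConv_two_mul_self hi fun k _ _ => hsup (by omega) (by omega) (by omega),
          if_neg (by omega), if_neg (by omega)] at Ei
        simp only [hyperbolicForm, hT i hi (by omega)] at Ei
        rcases hd with e | e <;> rw [e] at Ei <;> omega
      · simp only [hyperbolicForm, hT i hi (by omega), hT r hr (by omega)] at Eir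
        rw [if_neg (by omega), if_neg (by omega)] at Eir
        rcases hd with e | e <;> rcases hdr with e' | e' <;> rw [e, e'] at Eir <;> omega

lemma false_of_large_of_fst_ne_zero (h : ReciprocalSystem n r ε η z) (ht : (z i).1 = 0)
    (htr : (z r).1 = 2 ∨ (z r).1 = -2) (hdr : (z r).2 = 0) : False := by
  have hr := h.r_pos
  have hrn := h.two_mul_lt
  have hsup {j k} := eq_zero_or_eq_zero (n := n) (z := z) hS (j := j) (k := k)
  have hmr : (z (n - r)).1 = 2 ∨ (z (n - r)).1 = -2 := by
    rw [h.fst_mirror (Nat.sub_add_cancel (by omega : r ≤ n))]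
    rcases h.sign_mul with e | e <;> rw [e] <;> omega
  by_cases hn3 : n = 3 * r
  · have E := h.conv_eq (p := 2 * r) (by omega) (by omega)
    rw [innerConv_two_mul_self hr fun k _ _ => hsup (by omega) (by omega) (by omega),
      if_pos rfl, if_neg (by omega), show 2 * r = n - r by omega] at E
    have := h.sign_ε
    simp only [hyperbolicForm, hdr] at E
    rcases htr with e | e <;> rw [e] at E <;> omega
  by_cases hi2 : 2 * i = r
  · have E := h.fst_eq (p := n - r) (by omega) (by omega) (by omega) (by omega)
    rw [innerConv, Finset.sum_eq_zero fun k hk => ?_] at E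
    · omega
    · rw [Finset.mem_Ioo] at hk
      have hcases : (k = i ∧ n - r - k = r) ∨ (k = r ∧ n - r - k = i) ∨
          z k = 0 ∨ z (n - r - k) = 0 := by
        by_contra! hc
        have := hS k hk.1 (by omega) hc.2.2.1
        have := hS (n - r - k) (by omega) (by omega) hc.2.2.2
        omega
      rcases hcases with ⟨e, e'⟩ | ⟨e, e'⟩ | e
      · rw [e', e]; simp [hyperbolicForm, ht, hdr]
      · rw [e', e]; simp [hyperbolicForm, ht, hdr]
      · exact hyperbolicForm_eq_zero e
  · have E := h.fst_eq (p := r) hr (by omega) (by omega) (by omega)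
    rw [innerConv_eq_zero fun k _ _ => hsup (by omega) (by omega) (by omega)] at E
    omega

end LargeNullIndex

lemma eq_five_mul_of_large (h : ReciprocalSystem n r ε η z) {i : ℕ} (hi : 0 < i) (hin : 2 * i < n)
    (ht : (z i).1 = 0) (hd : ¬ ((z i).2 = 0 ∨ (z i).2 = 2 ∨ (z i).2 = -2)) :
    n = 5 * r ∧ ε = -1 := by
  have hr := h.r_pos
  have hrn := h.two_mul_lt
  obtain ⟨hir, hdi⟩ := h.snd_of_large hi hin ht hd
  obtain ⟨hwr, hS⟩ := h.support_of_large hi hin hir hdi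
  have hpar := h.parity r
  obtain ⟨h2, h4⟩ := h.ord
  unfold weight at hwr
  have htr : -3 < (z r).1 ∧ (z r).1 < 3 := ⟨by nlinarith, by nlinarith⟩
  have hdr : -3 < (z r).2 ∧ (z r).2 < 3 := ⟨by nlinarith, by nlinarith⟩
  by_cases htr0 : (z r).1 = 0
  · refine h.eq_five_mul_of_large_of_fst_eq_zero hi hin hS hir hdi (fun k h₀ hn => ?_) (by omega)
    by_contra hk
    rcases hS k h₀ hn fun hz => hk (by rw [hz]; rfl) with rfl | hm | rfl | hm
    · exact hk ht
    · exact hk (by rw [h.fst_mirror hm, ht, mul_zero])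
    · exact hk htr0
    · exact hk (by rw [h.fst_mirror hm, htr0, mul_zero])
  · exact (h.false_of_large_of_fst_ne_zero hi hin hS ht (by omega) (by omega)).elim

end ReciprocalSystem

/-- A `ReciprocalSystem` in which `tₚ = 0` forces `dₚ ∈ {0, 2, -2}` off the centre; by
`ReciprocalSystem.eq_five_mul_of_large` this excludes only an exceptional family. -/
structure ReducedSystem (n r : ℕ) (ε η : ℤ) (z : ℕ → ℤ × ℤ) : Prop
    extends ReciprocalSystem n r ε η z where
  snd_of_lower_half : ∀ {p}, 0 < p → 2 * p < n → (z p).1 = 0 →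
    (z p).2 = 0 ∨ (z p).2 = 2 ∨ (z p).2 = -2

lemma ReciprocalSystem.fst_eq_zero {n r : ℕ} {ε η : ℤ} {z : ℕ → ℤ × ℤ}
    (h : ReciprocalSystem n r ε η z) {p : ℕ} (h₀ : 0 < p) (hn : p < n) (hr : p ≠ 2 * r)
    (hd : p + 2 * r ≠ n) (hoff : ∀ k, 0 < k → 2 * k ≤ p → z k = 0 ∨ z (p - k) = 0) :
    (z p).1 = 0 := by
  have := h.fst_eq h₀ hn hr hd
  rw [innerConv_eq_zero hoff] at this
  omega

namespace ReducedSystem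

variable {n r : ℕ} {ε η : ℤ} {z : ℕ → ℤ × ℤ}

lemma snd_of_fst_eq_zero (h : ReducedSystem n r ε η z) {p : ℕ} (h₀ : 0 < p) (hn : p < n)
    (hc : 2 * p ≠ n) (ht : (z p).1 = 0) : (z p).2 = 0 ∨ (z p).2 = 2 ∨ (z p).2 = -2 := by
  rcases hc.lt_or_gt with hlt | hgt
  · exact h.snd_of_lower_half h₀ hlt ht
  · have hm : p + (n - p) = n := by omega
    have ht' : (z (n - p)).1 = 0 := by rw [h.fst_mirror (k := p) (by omega), ht, mul_zero]
    have := h.snd_of_lower_half (by omega) (by omega) ht'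
    rw [h.snd_mirror hm]
    rcases h.sign_mul with e | e <;> rw [e] <;> omega

lemma snd_of_ne_zero (h : ReducedSystem n r ε η z) {p : ℕ} (h₀ : 0 < p) (hn : p < n)
    (hc : 2 * p ≠ n) (ht : (z p).1 = 0) (hz : z p ≠ 0) : (z p).2 = 2 ∨ (z p).2 = -2 :=
  (h.snd_of_fst_eq_zero h₀ hn hc ht).resolve_left fun hd => hz (Prod.ext ht hd)

lemma eq_zero_of_lt (h : ReducedSystem n r ε η z) {b : ℕ} (hb : b ≤ r) (hbn : b + 2 * r ≤ n)
    {p : ℕ} (h₀ : 0 < p) (hp : p < b) : z p = 0 := by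
  induction p using Nat.strong_induction_on with
  | _ p ih =>
    have ht := h.fst_eq_zero h₀ (by omega) (by omega) (by omega)
      fun k hk _ => Or.inl (ih k (by omega) hk (by omega))
    have := h.low h₀ (by omega)
    have := h.snd_of_fst_eq_zero h₀ (by omega) (by omega) ht
    exact Prod.ext ht (by rw [Prod.snd_zero]; omega)

/-! ### The range `n ≤ 4 * r` -/

lemma snd_of_add_two_mul_eq (h : ReducedSystem n r ε η z) {e : ℕ} (he₀ : 0 < e) (her : e < r)
    (hen : e + 2 * r = n) : (z e).1 = 2 * η ∧ ((z e).2 = 2 ∨ (z e).2 = -2) := by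
  have ht := h.conv_eq he₀ (by omega)
  rw [innerConv_eq_zero fun k hk _ => Or.inl (h.eq_zero_of_lt her.le hen.le hk (by omega)),
    if_neg (by omega), if_pos hen] at ht
  have ht : (z e).1 = 2 * η := by omega
  have hweight := h.sum_lower_half_weight_le (s := {e, r}) (by simp; omega)
  rw [Finset.sum_pair her.ne] at hweight
  have hr := h.four_le_weight_r
  have hlow := h.low he₀ her
  have hη : η ^ 2 = 1 := by rcases h.sign_η with rfl | rfl <;> norm_num
  have hsq : (z e).2 ^ 2 ≤ 12 := by
    rw [weight, ht] at hweight
    linarith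
  have hlt : (z e).2 < 4 := by nlinarith
  have hgt : -4 < (z e).2 := by nlinarith
  have := h.sign_η
  omega

lemma eq_zero_of_ne_of_lt (h : ReducedSystem n r ε η z) {e : ℕ} (he₀ : 0 < e) (her : e < r)
    (hen : e + 2 * r = n) {p : ℕ} (h₀ : 0 < p) (hp : p ≤ r) (hpe : p ≠ e) :
    (z p).1 = 0 ∧ (p < r → z p = 0) := by
  induction p using Nat.strong_induction_on with
  | _ p ih =>
    have hzero : ∀ k, 0 < k → k < p → k ≠ e → z k = 0 := fun k hk hkp hke =>
      (ih k hkp hk (by omega) hke).2 (by omega)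
    have hconv : innerConv z p = 0 := by
      by_cases hp2 : p = 2 * e
      · obtain ⟨ht, hd⟩ := h.snd_of_add_two_mul_eq he₀ her hen
        rw [hp2, innerConv_two_mul_self he₀ fun k hk hke =>
          Or.inl (hzero k hk (by omega) hke.ne), hyperbolicForm, ht]
        rcases h.sign_η with rfl | rfl <;> rcases hd with hd | hd <;> rw [hd] <;> norm_num
      · refine innerConv_eq_zero fun k hk hkp => ?_
        by_cases hke : k = e
        · exact Or.inr (hzero _ (by omega) (by omega) (by omega))
        · exact Or.inl (hzero k hk (by omega) hke)
    have ht : (z p).1 = 0 := by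
      have := h.fst_eq h₀ (by omega) (by omega) (by omega)
      omega
    refine ⟨ht, fun hpr => Prod.ext ht ?_⟩
    have := h.low h₀ hpr
    have := h.snd_of_fst_eq_zero h₀ (by omega) (by omega) ht
    rw [Prod.snd_zero]
    omega

lemma three_mul_le (h : ReducedSystem n r ε η z) : 3 * r ≤ n := by
  by_contra! hlt
  have hr := h.r_pos
  have hrn := h.two_mul_lt
  obtain ⟨e, hen⟩ : ∃ e, e + 2 * r = n := ⟨n - 2 * r, by omega⟩
  have he₀ : 0 < e := by omega
  have her : e < r := by omega
  have hzero {p} := h.eq_zero_of_ne_of_lt he₀ her hen (p := p)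
  have htr := (hzero hr le_rfl (by omega)).1
  have htm : (z (e + r)).1 = 0 := by rw [h.fst_mirror (k := r) (by omega), htr, mul_zero]
  have E := h.fst_eq (p := e + r) (by omega) (by omega) (by omega) (by omega)
  rw [innerConv_add he₀ her fun k hk _ hke => Or.inl ((hzero hk (by omega) hke).2 (by omega)), htm,
    hyperbolicForm, htr] at E
  rcases (h.snd_of_add_two_mul_eq he₀ her hen).2 with e | e <;>
    rcases h.snd_of_ne_zero hr (by omega) (by omega) htr h.z_r_ne_zero with e' | e' <;>
    rw [e, e'] at E <;> omega

lemma eq_zero_of_lt_r (h : ReducedSystem n r ε η z) {p : ℕ} (h₀ : 0 < p) (hp : p < r) :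
    z p = 0 :=
  h.eq_zero_of_lt le_rfl (by have := h.three_mul_le; omega) h₀ hp

lemma innerConv_eq_zero_of_lt_two_mul (h : ReducedSystem n r ε η z) {p : ℕ} (hp : p < 2 * r) :
    innerConv z p = 0 :=
  innerConv_eq_zero fun k hk _ => Or.inl (h.eq_zero_of_lt_r hk (by omega))

lemma innerConv_two_mul_r (h : ReducedSystem n r ε η z) :
    innerConv z (2 * r) = hyperbolicForm (z r) (z r) :=
  innerConv_two_mul_self h.r_pos fun _ hk hkr => Or.inl (h.eq_zero_of_lt_r hk hkr)

lemma sign_eq_one_of_eq_three_mul (h : ReducedSystem n r ε η z) (hn : n = 3 * r) : ε = 1 := by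
  have hr := h.r_pos
  have htr := h.conv_eq hr (by omega)
  rw [h.innerConv_eq_zero_of_lt_two_mul (by omega), if_neg (by omega), if_pos (by omega)] at htr
  have hm := h.fst_mirror (j := 2 * r) (k := r) (by omega)
  have E := h.conv_eq (p := 2 * r) (by omega) (by omega)
  rw [h.innerConv_two_mul_r, hyperbolicForm, if_pos rfl, if_neg (by omega), hm,
    show (z r).1 = 2 * η by omega] at E
  rcases h.sign_ε with rfl | rfl
  · rfl
  · rcases h.sign_η with rfl | rfl <;> nlinarith [mul_self_nonneg (z r).2]

lemma z_r (h : ReducedSystem n r ε η z) (hn : 3 * r < n) :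
    (z r).1 = 0 ∧ ((z r).2 = 2 ∨ (z r).2 = -2) := by
  have hr := h.r_pos
  have ht := h.fst_eq hr (by omega) (by omega) (by omega)
  rw [h.innerConv_eq_zero_of_lt_two_mul (by omega)] at ht
  have ht : (z r).1 = 0 := by omega
  exact ⟨ht, h.snd_of_ne_zero hr (by omega) (by omega) ht h.z_r_ne_zero⟩

lemma innerConv_two_mul_r_eq_four (h : ReducedSystem n r ε η z) (hn : 3 * r < n) :
    innerConv z (2 * r) = 4 := by
  obtain ⟨ht, hd⟩ := h.z_r hn
  rw [h.innerConv_two_mul_r, hyperbolicForm, ht]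
  rcases hd with hd | hd <;> rw [hd] <;> norm_num

lemma four_mul_le (h : ReducedSystem n r ε η z) (hn : 3 * r < n) : 4 * r ≤ n := by
  by_contra! hlt
  have hr := h.r_pos
  have hmid := h.conv_eq (p := n - 2 * r) (by omega) (by omega)
  rw [h.innerConv_eq_zero_of_lt_two_mul (by omega), if_neg (by omega), if_pos (by omega)] at hmid
  have hm := h.fst_mirror (j := 2 * r) (k := n - 2 * r) (by omega)
  have E := h.conv_eq (p := 2 * r) (by omega) (by omega)
  rw [h.innerConv_two_mul_r_eq_four hn, if_pos rfl, if_neg (by omega), hm,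
    show (z (n - 2 * r)).1 = 2 * η by omega] at E
  rcases h.sign_ε with rfl | rfl <;> rcases h.sign_η with rfl | rfl <;> omega

lemma four_dvd_weight (h : ReducedSystem n r ε η z) (hn : 4 * r ≤ n) {p : ℕ} (h₀ : 0 < p)
    (hp : p < 2 * r) : 4 ∣ weight (z p) := by
  have hconv := h.fst_eq h₀ (by omega) (by omega) (by omega)
  rw [h.innerConv_eq_zero_of_lt_two_mul hp] at hconv
  have ht : (z p).1 = 0 := by omega
  rw [weight, ht]
  rcases h.snd_of_fst_eq_zero h₀ (by omega) (by omega) ht with hd | hd | hd <;> rw [hd] <;>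
    norm_num

lemma ne_four_mul (h : ReducedSystem n r ε η z) : n ≠ 4 * r := by
  intro hn
  have hr := h.r_pos
  have hcenter : ∑ k ∈ Finset.Ioo 0 n with 2 * k = n, weight (z k) = weight (z (2 * r)) := by
    rw [Finset.sum_eq_single_of_mem (2 * r) (by simp; omega)]
    intro k hk hkr
    simp only [Finset.mem_filter] at hk
    omega
  have hnorm := h.two_mul_sum_weight_add_center
  rw [hcenter] at hnorm
  have hlower : 4 ∣ ∑ k ∈ Finset.Ioo 0 n with 2 * k < n, weight (z k) :=
    Finset.dvd_sum fun k hk => by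
      simp only [Finset.mem_filter, Finset.mem_Ioo] at hk
      exact h.four_dvd_weight hn.ge hk.1.1 (by omega)
  have hfst := h.fst_mirror (j := 2 * r) (k := 2 * r) (by omega)
  have hsnd := h.snd_mirror (j := 2 * r) (k := 2 * r) (by omega)
  have hpar := h.parity (2 * r)
  have E := h.conv_eq (p := 2 * r) (by omega) (by omega)
  rw [h.innerConv_two_mul_r_eq_four (by omega), if_pos rfl, if_pos (by omega)] at E
  rcases h.sign_ε with rfl | rfl <;> rcases h.sign_η with rfl | rfl
  · omega
  · omega
  · omega
  · have ht : (z (2 * r)).1 = -2 := by omega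
    have hd : (z (2 * r)).2 = 0 := by omega
    have hw : weight (z (2 * r)) = 4 := by rw [weight, ht, hd]; norm_num
    omega

lemma four_mul_lt (h : ReducedSystem n r ε η z) (hn : ¬ (n = 3 * r ∧ ε = 1)) : 4 * r < n := by
  have h3 : 3 * r < n :=
    h.three_mul_le.lt_of_ne fun hn3 => hn ⟨hn3.symm, h.sign_eq_one_of_eq_three_mul hn3.symm⟩
  exact (h.four_mul_le h3).lt_of_ne h.ne_four_mul.symm

/-! ### The range `4 * r < n` -/

lemma fst_eq_zero_of_lt_two_mul (h : ReducedSystem n r ε η z) (hn : 4 * r < n) {p : ℕ}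
    (h₀ : 0 < p) (hp : p < 2 * r) : (z p).1 = 0 :=
  h.fst_eq_zero h₀ (by omega) (by omega) (by omega)
    fun _ hk _ => Or.inl (h.eq_zero_of_lt_r hk (by omega))

lemma two_mul_fst_two_mul_r (h : ReducedSystem n r ε η z) (hn : 4 * r < n) :
    2 * (z (2 * r)).1 = 1 + ε := by
  have hr := h.r_pos
  have E := h.conv_eq (p := 2 * r) (by omega) (by omega)
  rw [h.innerConv_two_mul_r_eq_four (by omega), if_pos rfl, if_neg (by omega)] at E
  omega

lemma two_mul_eq_three_mul_r (h : ReducedSystem n r ε η z) (hn : 4 * r < n) {q : ℕ}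
    (hrq : r < q) (hqr : q < 2 * r) (hq : z q ≠ 0) (hmin : ∀ k, r < k → k < q → z k = 0) :
    2 * q = 3 * r ∧ ε = 1 ∧ ((z q).2 = 2 ∨ (z q).2 = -2) ∧ ¬ 2 ∣ (z (2 * r)).2 := by
  have hr := h.r_pos
  obtain ⟨htr, hdr⟩ := h.z_r (by omega)
  have hzero : ∀ k, 0 < k → k < q → k ≠ r → z k = 0 := fun k h₀ hkq hkr =>
    hkr.lt_or_gt.elim (h.eq_zero_of_lt_r h₀) fun hk => hmin k hk hkq
  have htq := h.fst_eq_zero_of_lt_two_mul hn (by omega) hqr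
  have hdq := h.snd_of_ne_zero (by omega) (by omega) (by omega) htq hq
  have hodd : ¬ 2 ∣ (z (2 * q - r)).2 := by
    obtain ⟨c, E⟩ := h.exists_fst_eq (p := 2 * q) (by omega) (by omega) (by omega)
    rw [innerConv_two_mul (by omega) {r} (by simp; omega) fun k h₀ hkq hkr =>
      Or.inl (hzero k h₀ hkq (by simpa using hkr)), Finset.sum_singleton, hyperbolicForm, htr,
      hyperbolicForm, htq] at E
    rcases hdr with e | e <;> rcases hdq with e' | e' <;> rw [e, e'] at E <;> omega
  have hpar := h.parity (2 * q - r)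
  have hq2 : 2 * q - r = 2 * r := by
    by_contra hne
    have ht : 2 ∣ (z (2 * q - r)).1 := by
      obtain ⟨c, E⟩ := h.exists_fst_eq (p := 2 * q - r) (by omega) (by omega) hne
      rw [innerConv_eq_zero fun k h₀ hk => ?_] at E
      · omega
      · by_cases hkr : k = r
        · exact Or.inr (hzero _ (by omega) (by omega) (by omega))
        · exact Or.inl (hzero k h₀ (by omega) hkr)
    omega
  rw [hq2] at hodd hpar
  have := h.two_mul_fst_two_mul_r hn
  have := h.sign_ε
  exact ⟨by omega, by omega, hdq, hodd⟩

section

variable (hn : 4 * r < n) (hgap : ∀ k, r < k → k < 2 * r → z k = 0)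

include hn hgap

lemma sign_eq_neg_one (h : ReducedSystem n r ε η z) : ε = -1 := by
  refine h.sign_ε.resolve_left ?_
  rintro rfl
  have hr := h.r_pos
  obtain ⟨htr, hdr⟩ := h.z_r (by omega)
  have ht := h.two_mul_fst_two_mul_r hn
  have hpar := h.parity (2 * r)
  obtain ⟨c, E⟩ := h.exists_fst_eq (p := r + 2 * r) (by omega) (by omega) (by omega)
  rw [innerConv_add hr (by omega) fun k h₀ hk hkr => Or.inl (hkr.lt_or_gt.elim
    (h.eq_zero_of_lt_r h₀) fun hrk => hgap k hrk (by omega)), hyperbolicForm, htr] at E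
  rcases hdr with e | e <;> rw [e] at E <;> omega

lemma exists_next_index (h : ReducedSystem n r ε η z) (hz2 : z (2 * r) = 0) :
    ∃ q, 2 * r < q ∧ 2 * q < n ∧ z q ≠ 0 ∧ ∀ k, 0 < k → k < q → k ≠ r → z k = 0 := by
  classical
  have hr := h.r_pos
  have hex : ∃ q, 2 * r < q ∧ 2 * q < n ∧ z q ≠ 0 := by
    by_contra! hall
    obtain ⟨x, hx⟩ := h.exists_two_mul_sum_weight_add_sq {r} (by simp; omega)
      fun k h₀ hkn hkr => by
        rw [Finset.mem_singleton] at hkr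
        rcases lt_trichotomy k (2 * r) with hk | rfl | hk
        · exact (Ne.lt_or_gt hkr).elim (h.eq_zero_of_lt_r h₀) fun hrk => hgap k hrk hk
        · exact hz2
        · exact hall k hk hkn
    obtain ⟨htr, hdr⟩ := h.z_r (by omega)
    have hx32 : x ^ 2 = 32 := by
      rw [Finset.sum_singleton, weight, htr] at hx
      rcases hdr with e | e <;> rw [e] at hx <;> linarith
    have hx6 : x < 6 := by nlinarith
    have hx6' : -6 < x := by nlinarith
    interval_cases x <;> omega
  obtain ⟨hrq, hqn, hq⟩ := Nat.find_spec hex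
  refine ⟨Nat.find hex, hrq, hqn, hq, fun k h₀ hk hkr => ?_⟩
  rcases lt_trichotomy k (2 * r) with hk2 | rfl | hk2
  · exact hkr.lt_or_gt.elim (h.eq_zero_of_lt_r h₀) fun hrk => hgap k hrk hk2
  · exact hz2
  · by_contra hz
    exact Nat.find_min hex hk ⟨hk2, by omega, hz⟩

lemma z_two_mul_r (h : ReducedSystem n r ε η z) :
    (z (2 * r)).1 = 0 ∧ ((z (2 * r)).2 = 2 ∨ (z (2 * r)).2 = -2) := by
  have hr := h.r_pos
  obtain ⟨htr, hdr⟩ := h.z_r (by omega)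
  have ht := h.two_mul_fst_two_mul_r hn
  rw [h.sign_eq_neg_one hn hgap] at ht
  have ht : (z (2 * r)).1 = 0 := by omega
  refine ⟨ht, h.snd_of_ne_zero (by omega) (by omega) (by omega) ht fun hz2 => ?_⟩
  obtain ⟨q, hrq, hqn, hq, hzero⟩ := h.exists_next_index hn hgap hz2
  have htq := h.fst_eq_zero (p := q) (by omega) (by omega) (by omega) (by omega) fun k h₀ hk => by
    by_cases hkr : k = r
    · exact Or.inr (hzero _ (by omega) (by omega) (by omega))
    · exact Or.inl (hzero k h₀ (by omega) hkr)
  have hdq := h.snd_of_ne_zero (by omega) (by omega) (by omega) htq hq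
  obtain ⟨c₁, E₁⟩ := h.exists_fst_eq (p := r + q) (by omega) (by omega) (by omega)
  rw [innerConv_add hr (by omega) fun k h₀ hk hkr => Or.inl (hzero k h₀ (by omega) hkr),
    hyperbolicForm, htr] at E₁
  obtain ⟨c₂, E₂⟩ := h.exists_fst_eq (p := r + (r + q)) (by omega) (by omega) (by omega)
  rw [innerConv_add hr (by omega) fun k h₀ hk hkr => Or.inl (hzero k h₀ (by omega) hkr),
    hyperbolicForm, htr] at E₂
  have := h.parity (r + q)
  rcases hdr with e | e <;> rcases hdq with e' | e' <;> rw [e] at E₂ <;> rw [e, e'] at E₁ <;>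
    omega

end

section

variable (hn : 4 * r < n) {e : ℕ} (hr2 : 2 * r < e) (hen : e < n) (hz : z e ≠ 0) (he : ¬ r ∣ e)
  (hlow : ∀ k, 0 < k → k < e → z k ≠ 0 → r ∣ k)

include hn hr2 hen hz he hlow

lemma two_mul_ne_of_not_dvd (h : ReducedSystem n r ε η z) : 2 * e ≠ n := by
  rintro rfl
  have hr := h.r_pos
  obtain ⟨htr, hdr⟩ := h.z_r (by omega)
  have ht := h.fst_eq (p := e) (by omega) (by omega) (by omega) (by omega)
  have hzero : z (e - r) = 0 := by
    by_contra hne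
    have := hlow _ (by omega) (by omega) hne
    rw [Nat.dvd_sub_iff_left (by omega) dvd_rfl] at this
    exact he this
  have h3 : e ≠ 3 * r := fun h3 => he (h3 ▸ Nat.dvd_mul_left r 3)
  have E := h.fst_eq (p := e + r) (by omega) (by omega) (by omega) (by omega)
  have c₀ := innerConv_add_mul (j := 0) hr he hlow (by omega)
  have c₁ := innerConv_add_mul (j := 1) hr he hlow (by omega)
  simp only [Finset.sum_range_zero, Finset.sum_range_one, Nat.reduceAdd, Nat.reduceSub, zero_mul,
    one_mul, mul_zero, add_zero, hyperbolicForm, htr] at c₀ c₁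
  rw [h.eq_zero_mirror (j := e + r) (k := e - r) (by omega) hzero, c₁] at E
  refine hz (Prod.ext (by simp; omega) ?_)
  rcases hdr with e | e <;> rw [e] at E <;> simp at E ⊢ <;> omega

variable (hgap : ∀ k, r < k → k < 2 * r → z k = 0)

include hgap

lemma add_two_mul_lt_of_not_dvd (h : ReducedSystem n r ε η z) (hc : 2 * e ≠ n) :
    e + 2 * r < n := by
  have hr := h.r_pos
  rcases hc.lt_or_gt with hlt | hgt
  · omega
  obtain ⟨k, hk₂, hkn, hk⟩ : ∃ k, 2 * r < k ∧ 2 * k < n ∧ z k ≠ 0 := by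
    by_contra! hall
    obtain ⟨htr, hdr⟩ := h.z_r (by omega)
    obtain ⟨ht2, hd2⟩ := h.z_two_mul_r hn hgap
    obtain ⟨x, hx⟩ := h.exists_two_mul_sum_weight_add_sq {r, 2 * r} (by simp; omega)
      fun k h₀ hkn hks => by
        simp only [Finset.mem_insert, Finset.mem_singleton, not_or] at hks
        rcases lt_or_ge (2 * r) k with hk | hk
        · exact hall k hk hkn
        · exact (Ne.lt_or_gt hks.1).elim (h.eq_zero_of_lt_r h₀) fun hrk => hgap k hrk (by omega)
    have hx24 : x ^ 2 = 24 := by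
      rw [Finset.sum_pair (by omega), weight, weight, htr, ht2] at hx
      rcases hdr with e | e <;> rcases hd2 with e' | e' <;> rw [e, e'] at hx <;> linarith
    have hx5 : x < 5 := by nlinarith
    have hx5' : -5 < x := by nlinarith
    interval_cases x <;> omega
  have hrk := hlow k (by omega) (by omega) hk
  have hnr : ¬ r ∣ n := fun hrn => by
    have hm : z (n - e) ≠ 0 := fun h0 => hz (h.eq_zero_mirror (by omega) h0)
    have := hlow _ (by omega) (by omega) hm
    rw [Nat.dvd_sub_iff_right hen.le hrn] at this
    exact he this
  have hmk : z (n - k) ≠ 0 := fun h0 => hk (h.eq_zero_mirror (by omega) h0)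
  by_contra! hle
  have := hlow (n - k) (by omega) (by omega) hmk
  rw [Nat.dvd_sub_iff_left (by omega) hrk] at this
  exact hnr this

lemma false_of_not_dvd (h : ReducedSystem n r ε η z) : False := by
  have hr := h.r_pos
  obtain ⟨htr, hdr⟩ := h.z_r (by omega)
  obtain ⟨ht2, hd2⟩ := h.z_two_mul_r hn hgap
  have hc := h.two_mul_ne_of_not_dvd hn hr2 hen hz he hlow
  have hlt := h.add_two_mul_lt_of_not_dvd hn hr2 hen hz he hlow hgap hc
  have c₀ := innerConv_add_mul (j := 0) hr he hlow (by omega)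
  have c₁ := innerConv_add_mul (j := 1) hr he hlow (by omega)
  have c₂ := innerConv_add_mul (j := 2) hr he hlow hr2
  simp only [Finset.sum_range_succ, Finset.sum_range_zero, Nat.reduceAdd, Nat.reduceSub, zero_mul,
    one_mul, mul_zero, zero_add, add_zero, sub_zero, hyperbolicForm, htr, ht2] at c₀ c₁ c₂
  have E₀ := h.fst_eq (p := e) (by omega) (by omega) (by omega) (by omega)
  have hd := h.snd_of_ne_zero (by omega) hen hc (by omega) hz
  obtain ⟨a₁, E₁⟩ := h.exists_fst_eq (p := e + r) (by omega) (by omega) (by omega)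
  obtain ⟨a₂, E₂⟩ := h.exists_fst_eq (p := e + 2 * r) (by omega) hlt (by omega)
  have hpar := h.parity (e + r)
  rw [c₁] at E₁
  rw [c₂] at E₂
  rcases hdr with x | x <;> rcases hd2 with y | y <;> rcases hd with w | w <;>
    rw [x, w] at E₁ <;> rw [x, y, w] at E₂ <;> omega

end

lemma dvd_of_gap (h : ReducedSystem n r ε η z) (hn : 4 * r < n)
    (hgap : ∀ k, r < k → k < 2 * r → z k = 0) {k : ℕ} (h₀ : 0 < k) (hkn : k < n)
    (hz : z k ≠ 0) : r ∣ k := by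
  induction k using Nat.strong_induction_on with
  | _ k ih =>
    by_contra hrk
    have hr2 : 2 * r < k := by
      by_contra! hle
      have hne : k ≠ r ∧ k ≠ 2 * r := by
        constructor <;> rintro rfl <;> simp at hrk
      exact hz (hne.1.lt_or_gt.elim (h.eq_zero_of_lt_r h₀) fun hlt => hgap k hlt (by omega))
    exact h.false_of_not_dvd hn hr2 hkn hz hrk
      (fun j hj₀ hjk hzj => ih j hjk hj₀ (by omega) hzj) hgap

end ReducedSystem

/-- The configuration left over by `ReducedSystem.two_mul_eq_three_mul_r`: `r = 2 * ρ` and the first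
two nonzero coefficients have indices `2 * ρ` and `3 * ρ`. -/
structure TwoThreeSystem (n ρ : ℕ) (η : ℤ) (z : ℕ → ℤ × ℤ) : Prop
    extends ReducedSystem n (2 * ρ) 1 η z where
  eight_mul_lt : 8 * ρ < n
  gap : ∀ k, 2 * ρ < k → k < 3 * ρ → z k = 0
  snd_three : (z (3 * ρ)).2 = 2 ∨ (z (3 * ρ)).2 = -2
  odd_four : ¬ 2 ∣ (z (4 * ρ)).2

namespace TwoThreeSystem

variable {n ρ : ℕ} {η : ℤ} {z : ℕ → ℤ × ℤ}

lemma pos (h : TwoThreeSystem n ρ η z) : 0 < ρ := Nat.pos_of_mul_pos_left h.r_pos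

lemma eq_zero_of_lt_three (h : TwoThreeSystem n ρ η z) {k : ℕ} (h₀ : 0 < k) (hk : k < 3 * ρ)
    (hk2 : k ≠ 2 * ρ) : z k = 0 :=
  hk2.lt_or_gt.elim (h.eq_zero_of_lt_r h₀) fun hlt => h.gap k hlt hk

lemma z_two (h : TwoThreeSystem n ρ η z) :
    (z (2 * ρ)).1 = 0 ∧ ((z (2 * ρ)).2 = 2 ∨ (z (2 * ρ)).2 = -2) :=
  h.z_r (by have := h.eight_mul_lt; omega)

lemma fst_eq_zero_of_lt_four (h : TwoThreeSystem n ρ η z) {k : ℕ} (h₀ : 0 < k)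
    (hk : k < 4 * ρ) : (z k).1 = 0 :=
  h.fst_eq_zero_of_lt_two_mul (by have := h.eight_mul_lt; omega) h₀ (by omega)

lemma fst_four (h : TwoThreeSystem n ρ η z) : (z (4 * ρ)).1 = 1 := by
  have := h.two_mul_fst_two_mul_r (by have := h.eight_mul_lt; omega)
  rw [← mul_assoc] at this
  norm_num at this
  omega

lemma fst_eq_zero_of_innerConv (h : TwoThreeSystem n ρ η z) {p : ℕ} (h₀ : 0 < p) (hn : p < n)
    (hp : innerConv z p = 0) : (z p).1 = 0 ∧ p + 4 * ρ ≠ n := by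
  have E := h.conv_eq h₀ hn
  rw [hp, if_neg (by omega), zero_add, zero_add] at E
  have hpn : p + 4 * ρ ≠ n := fun hpn => by
    have := h.fst_mirror hpn
    rw [h.fst_four] at this
    rw [if_pos (by omega)] at E
    have := h.sign_η
    omega
  rw [if_neg (by omega)] at E
  exact ⟨by omega, hpn⟩

lemma innerConv_two_mul_add (h : TwoThreeSystem n ρ η z) {q : ℕ} (hq₂ : 2 * ρ < q)
    (hq₄ : q < 4 * ρ) :
    innerConv z (2 * ρ + q) = 2 * hyperbolicForm (z (2 * ρ)) (z q) :=
  innerConv_add h.r_pos hq₂ fun _ h₀ _ hk => Or.inl (h.eq_zero_of_lt_three h₀ (by omega) hk)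

lemma odd_five (h : TwoThreeSystem n ρ η z) : ¬ 2 ∣ (z (5 * ρ)).2 := by
  have hρ := h.pos
  have hn := h.eight_mul_lt
  obtain ⟨ht2, hd2⟩ := h.z_two
  obtain ⟨c, E⟩ := h.exists_fst_eq (p := 2 * ρ + 3 * ρ) (by omega) (by omega) (by omega)
  rw [h.innerConv_two_mul_add (by omega) (by omega), hyperbolicForm, ht2,
    show 2 * ρ + 3 * ρ = 5 * ρ by ring] at E
  have := h.parity (5 * ρ)
  rcases hd2 with e | e <;> rcases h.snd_three with e' | e' <;> rw [e, e'] at E <;> omega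

lemma fst_eq_zero_add_four (h : TwoThreeSystem n ρ η z) {q : ℕ} (hq₂ : 2 * ρ < q)
    (hq₄ : q < 4 * ρ) (hq : z q = 0) : (z (2 * ρ + q)).1 = 0 ∧ 2 * ρ + q + 4 * ρ ≠ n := by
  have hn := h.eight_mul_lt
  refine h.fst_eq_zero_of_innerConv (by omega) (by omega) ?_
  rw [h.innerConv_two_mul_add hq₂ hq₄, hyperbolicForm_eq_zero (Or.inr hq), mul_zero]

lemma two_dvd_snd_of_lt_four (h : TwoThreeSystem n ρ η z) {k : ℕ} (h₀ : 0 < k)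
    (hk : k < 4 * ρ) : 2 ∣ (z k).2 := by
  have := h.parity k
  rwa [h.fst_eq_zero_of_lt_four h₀ hk, zero_add] at this

lemma two_dvd_snd_add (h : TwoThreeSystem n ρ η z) {q : ℕ} (hq₂ : 2 * ρ < q) (hq₄ : q < 4 * ρ)
    (hq : z q = 0) : 2 ∣ (z (2 * ρ + q)).2 := by
  have := h.parity (2 * ρ + q)
  rwa [(h.fst_eq_zero_add_four hq₂ hq₄ hq).1, zero_add] at this

lemma odd_snd_add_snd (h : TwoThreeSystem n ρ η z) {e : ℕ} (he₃ : 3 * ρ < e) (he₄ : e < 4 * ρ)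
    (hz : z e ≠ 0) (hzero : ∀ k, 0 < k → k < e → k ≠ 2 * ρ → k ≠ 3 * ρ → z k = 0) :
    ¬ 2 ∣ (z (2 * e - 2 * ρ)).2 + (z (2 * e - 3 * ρ)).2 := by
  have hn := h.eight_mul_lt
  obtain ⟨ht2, hd2⟩ := h.z_two
  have ht3 := h.fst_eq_zero_of_lt_four (k := 3 * ρ) (by omega) (by omega)
  have hte := h.fst_eq_zero_of_lt_four (by omega) he₄
  have hde := h.snd_of_ne_zero (by omega) (by omega) (by omega) hte hz
  obtain ⟨c, E⟩ := h.exists_fst_eq (p := 2 * e) (by omega) (by omega) (by omega)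
  have hconv := innerConv_two_mul (z := z) (q := e) (by omega) {2 * ρ, 3 * ρ} (by simp; omega)
    fun k h₀ hke hks => by
      simp only [Finset.mem_insert, Finset.mem_singleton, not_or] at hks
      exact Or.inl (hzero k h₀ hke hks.1 hks.2)
  rw [Finset.sum_pair (by omega)] at hconv
  simp only [hyperbolicForm, ht2, ht3, hte] at hconv
  rw [hconv] at E
  rcases hd2 with x | x <;> rcases h.snd_three with y | y <;> rcases hde with w | w <;>
    rw [x, y, w] at E <;> omega

lemma eq_zero_of_lt_four (h : TwoThreeSystem n ρ η z) {e : ℕ} (he₃ : 3 * ρ < e)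
    (he₄ : e < 4 * ρ) : z e = 0 := by
  induction e using Nat.strong_induction_on with
  | _ e ih =>
    by_contra hz
    have hzero : ∀ k, 0 < k → k < e → k ≠ 2 * ρ → k ≠ 3 * ρ → z k = 0 := fun k h₀ hke h2 h3 =>
      h3.lt_or_gt.elim (fun hk => h.eq_zero_of_lt_three h₀ hk h2)
        fun hk => ih k hke hk (by omega)
    have hsum := h.odd_snd_add_snd he₃ he₄ hz hzero
    by_cases h7 : 2 * e = 7 * ρ
    · rw [show 2 * e - 2 * ρ = 5 * ρ by omega, show 2 * e - 3 * ρ = 4 * ρ by omega] at hsum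
      have := h.odd_four
      have := h.odd_five
      omega
    · have h₂ := h.two_dvd_snd_add (q := 2 * e - 4 * ρ) (by omega) (by omega)
        (hzero _ (by omega) (by omega) (by omega) (by omega))
      rw [show 2 * ρ + (2 * e - 4 * ρ) = 2 * e - 2 * ρ by omega] at h₂
      have h₃ : 2 ∣ (z (2 * e - 3 * ρ)).2 := by
        rcases lt_or_ge (2 * e - 3 * ρ) (4 * ρ) with hlt | hge
        · exact h.two_dvd_snd_of_lt_four (by omega) hlt
        · have := h.two_dvd_snd_add (q := 2 * e - 5 * ρ) (by omega) (by omega)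
            (hzero _ (by omega) (by omega) (by omega) (by omega))
          rwa [show 2 * ρ + (2 * e - 5 * ρ) = 2 * e - 3 * ρ by omega] at this
      omega

lemma fst_eq_zero_of_lt_six (h : TwoThreeSystem n ρ η z) {k : ℕ} (hk₄ : 4 * ρ < k)
    (hk₆ : k < 6 * ρ) (hk₅ : k ≠ 5 * ρ) : (z k).1 = 0 ∧ k + 4 * ρ ≠ n := by
  have hz : z (k - 2 * ρ) = 0 := by
    rcases lt_or_gt_of_ne (show k - 2 * ρ ≠ 3 * ρ by omega) with hlt | hgt
    · exact h.gap _ (by omega) hlt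
    · exact h.eq_zero_of_lt_four hgt (by omega)
  have := h.fst_eq_zero_add_four (by omega) (by omega) hz
  rwa [show 2 * ρ + (k - 2 * ρ) = k by omega] at this

lemma eq_nine_mul_or_le (h : TwoThreeSystem n ρ η z) : n = 9 * ρ ∨ 10 * ρ ≤ n := by
  have hn := h.eight_mul_lt
  by_contra! hne
  exact (h.fst_eq_zero_of_lt_six (k := n - 4 * ρ) (by omega) (by omega) (by omega)).2 (by omega)

-- These hypotheses are what the convolutions reduce to at an extremal `e` off `ρℤ` with `z e ≠ 0`.
lemma false_of_innerConv (h : TwoThreeSystem n ρ η z) {e : ℕ} (he : 4 * ρ < e)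
    (hen : e + 5 * ρ < n) (ht₀ : (z e).1 = 0) (hd₀ : (z e).2 = 2 ∨ (z e).2 = -2)
    (ht₁ : (z (e + ρ)).1 = 0)
    (h₂ : innerConv z (e + 2 * ρ) = 2 * hyperbolicForm (z (2 * ρ)) (z e))
    (h₃ : innerConv z (e + 3 * ρ) = 2 * (hyperbolicForm (z (2 * ρ)) (z (e + ρ))
      + hyperbolicForm (z (3 * ρ)) (z e)))
    (h₅ : 8 ∣ innerConv z (e + 5 * ρ) - 2 * (hyperbolicForm (z (2 * ρ)) (z (e + 3 * ρ))
      + hyperbolicForm (z (3 * ρ)) (z (e + 2 * ρ)) + hyperbolicForm (z (4 * ρ)) (z (e + ρ))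
      + hyperbolicForm (z (5 * ρ)) (z e))) : False := by
  have hρ := h.pos
  obtain ⟨ht2, hd2⟩ := h.z_two
  have ht3 := h.fst_eq_zero_of_lt_four (k := 3 * ρ) (by omega) (by omega)
  obtain ⟨a₂, E₂⟩ := h.exists_fst_eq (p := e + 2 * ρ) (by omega) (by omega) (by omega)
  obtain ⟨a₃, E₃⟩ := h.exists_fst_eq (p := e + 3 * ρ) (by omega) (by omega) (by omega)
  obtain ⟨a₅, E₅⟩ := h.exists_fst_eq (p := e + 5 * ρ) (by omega) hen (by omega)
  have hp₁ := h.parity (e + ρ)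
  have hp₂ := h.parity (e + 2 * ρ)
  have hp₃ := h.parity (e + 3 * ρ)
  obtain ⟨f, hf⟩ : ∃ f, (z (4 * ρ)).2 = 2 * f + 1 :=
    Int.odd_iff.2 (by have := h.odd_four; omega)
  obtain ⟨g, hg⟩ : ∃ g, (z (e + ρ)).2 = 2 * g := by
    rw [ht₁, zero_add] at hp₁
    exact hp₁
  simp only [hyperbolicForm, ht2, ht3, ht₀, ht₁, hf, hg, zero_mul, mul_zero, sub_zero] at h₂ h₃ h₅
  have hodd₅ := h.odd_five
  have hfg : 8 ∣ 2 * ((2 * f + 1) * (2 * g)) - 4 * g := ⟨f * g, by ring⟩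
  rw [h₂] at E₂
  rw [h₃] at E₃
  rw [← sub_eq_iff_eq_add.2 E₅] at h₅
  rcases hd2 with x | x <;> rcases h.snd_three with y | y <;> rcases hd₀ with w | w <;>
    rw [x, w] at E₂ <;> rw [x, y, w] at E₃ h₅ <;> omega

lemma eq_zero_of_lt_four_of_ne (h : TwoThreeSystem n ρ η z) {k : ℕ} (h₀ : 0 < k)
    (hk₄ : k < 4 * ρ) (hk₂ : k ≠ 2 * ρ) (hk₃ : k ≠ 3 * ρ) : z k = 0 :=
  hk₃.lt_or_gt.elim (fun hk => h.eq_zero_of_lt_three h₀ hk hk₂)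
    fun hk => h.eq_zero_of_lt_four hk hk₄

lemma innerConv_add_two_mul (h : TwoThreeSystem n ρ η z) {e : ℕ} (he₄ : 4 * ρ < e)
    (he₅ : e < 5 * ρ) :
    innerConv z (e + 2 * ρ) = 2 * hyperbolicForm (z (2 * ρ)) (z e) := by
  rw [add_comm]
  refine innerConv_add h.r_pos (by omega) fun k h₀ hk hk₂ => ?_
  by_cases hk₃ : k = 3 * ρ
  · exact Or.inr (h.eq_zero_of_lt_four (by omega) (by omega))
  · exact Or.inl (h.eq_zero_of_lt_four_of_ne h₀ (by omega) hk₂ hk₃)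

lemma innerConv_add_three_mul (h : TwoThreeSystem n ρ η z) {e : ℕ} (he₄ : 4 * ρ < e)
    (he₅ : e < 5 * ρ) :
    innerConv z (e + 3 * ρ) = 2 * (hyperbolicForm (z (2 * ρ)) (z (e + ρ))
      + hyperbolicForm (z (3 * ρ)) (z e)) := by
  have hρ := h.pos
  rw [innerConv_eq_two_mul_sum {2 * ρ, 3 * ρ} (by simp; omega), Finset.sum_pair (by omega),
    show e + 3 * ρ - 2 * ρ = e + ρ by omega, Nat.add_sub_cancel]
  intro k h₀ hk hks
  simp only [Finset.mem_insert, Finset.mem_singleton, not_or] at hks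
  exact Or.inl (h.eq_zero_of_lt_four_of_ne h₀ (by omega) hks.1 hks.2)

lemma eight_dvd_innerConv_add_five_mul (h : TwoThreeSystem n ρ η z) {e : ℕ} (he₄ : 4 * ρ < e)
    (he₅ : e < 5 * ρ) (hmax : ∀ k, e < k → k < 5 * ρ → z k = 0) :
    8 ∣ innerConv z (e + 5 * ρ) - 2 * (hyperbolicForm (z (2 * ρ)) (z (e + 3 * ρ))
      + hyperbolicForm (z (3 * ρ)) (z (e + 2 * ρ)) + hyperbolicForm (z (4 * ρ)) (z (e + ρ))
      + hyperbolicForm (z (5 * ρ)) (z e)) := by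
  have hρ := h.pos
  have hdvd := eight_dvd_innerConv_sub (z := z) (p := e + 5 * ρ) {2 * ρ, 3 * ρ, 4 * ρ, e}
    (by simp; omega) ?_ fun k hk => hmax k (by omega) (by omega)
  · rw [Finset.sum_insert (by simp; omega), Finset.sum_insert (by simp; omega),
      Finset.sum_pair (by omega), show e + 5 * ρ - 2 * ρ = e + 3 * ρ by omega,
      show e + 5 * ρ - 3 * ρ = e + 2 * ρ by omega, show e + 5 * ρ - 4 * ρ = e + ρ by omega,
      Nat.add_sub_cancel_left, hyperbolicForm_comm (z e), ← add_assoc, ← add_assoc] at hdvd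
    exact hdvd
  · intro k h₀ hk hks
    simp only [Finset.mem_insert, Finset.mem_singleton, not_or] at hks
    rcases lt_or_ge k (4 * ρ) with hk₄ | hk₄
    · rw [hyperbolicForm_eq_zero (Or.inl (h.eq_zero_of_lt_four_of_ne h₀ hk₄ hks.1 hks.2.1))]
      exact dvd_zero 4
    · have heven : ∀ j, 4 * ρ < j → j < 6 * ρ → j ≠ 5 * ρ → (z j).1 = 0 ∧ 2 ∣ (z j).2 :=
        fun j hj₄ hj₆ hj₅ => by
          have ht := (h.fst_eq_zero_of_lt_six hj₄ hj₆ hj₅).1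
          have := h.parity j
          rw [ht, zero_add] at this
          exact ⟨ht, this⟩
      obtain ⟨ht, hd⟩ := heven k (by omega) (by omega) (by omega)
      obtain ⟨-, hd'⟩ := heven (e + 5 * ρ - k) (by omega) (by omega) (by omega)
      rw [hyperbolicForm, ht, zero_mul, sub_zero]
      exact mul_dvd_mul (a := (2 : ℤ)) (c := 2) hd hd'

lemma eq_zero_of_lt_five (h : TwoThreeSystem n ρ η z) {e : ℕ} (he₄ : 4 * ρ < e)
    (he₅ : e < 5 * ρ) : z e = 0 := by
  induction he : 5 * ρ - e using Nat.strong_induction_on generalizing e with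
  | _ _ ih =>
    have hmax : ∀ k, e < k → k < 5 * ρ → z k = 0 := fun k hek hk =>
      ih (5 * ρ - k) (by omega) (by omega) hk rfl
    by_contra hz
    have hn := h.eight_mul_lt
    obtain ⟨ht2, hd2⟩ := h.z_two
    have ht := (h.fst_eq_zero_of_lt_six he₄ (by omega) (by omega)).1
    rcases h.eq_nine_mul_or_le with hn9 | hn10
    · have E := h.fst_eq (p := e + 2 * ρ) (by omega) (by omega) (by omega) (by omega)
      rw [h.innerConv_add_two_mul he₄ he₅, hyperbolicForm, ht2, h.eq_zero_mirror
        (show e + 2 * ρ + (7 * ρ - e) = n by omega)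
        (h.gap _ (by omega) (by omega)), Prod.fst_zero] at E
      rw [Prod.ext_iff, Prod.fst_zero, Prod.snd_zero] at hz
      rcases hd2 with x | x <;> rw [x] at E <;> omega
    · exact h.false_of_innerConv he₄ (by omega) ht
        (h.snd_of_ne_zero (by omega) (by omega) (by omega) ht hz)
        (h.fst_eq_zero_of_lt_six (by omega) (by omega) (by omega)).1
        (h.innerConv_add_two_mul he₄ he₅) (h.innerConv_add_three_mul he₄ he₅)
        (h.eight_dvd_innerConv_add_five_mul he₄ he₅ hmax)

section

variable {e : ℕ} (he₅ : 5 * ρ < e) (hen : e < n) (hz : z e ≠ 0) (he : ¬ ρ ∣ e)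
  (hlow : ∀ k, 0 < k → k < e → z k ≠ 0 → ρ ∣ k)

include he₅ hen hz he hlow

lemma add_five_mul_lt_of_not_dvd (h : TwoThreeSystem n ρ η z) : e + 5 * ρ < n := by
  have hn := h.eight_mul_lt
  by_contra! hle
  by_cases hρn : ρ ∣ n
  · have := hlow (n - e) (by omega) (by omega) fun h0 => hz (h.eq_zero_mirror (by omega) h0)
    rw [Nat.dvd_sub_iff_right hen.le hρn] at this
    exact he this
  have hw : e ≤ n - 4 * ρ := by
    by_contra! hlt
    have := hlow (n - 4 * ρ) (by omega) hlt fun h0 => by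
      have := h.eq_zero_mirror (show 4 * ρ + (n - 4 * ρ) = n by omega) h0
      have ht := h.fst_four
      simp [this] at ht
    rw [Nat.dvd_sub_iff_left (by omega) (Nat.dvd_mul_left ρ 4)] at this
    exact hρn this
  refine (h.fst_eq_zero_of_innerConv (p := n - 4 * ρ) (by omega) (by omega) ?_).2 (by omega)
  refine innerConv_eq_zero fun k h₀ hk => ?_
  by_contra! hne
  have hρk := hlow k h₀ (by omega) hne.1
  have hk₂ : 2 * ρ ≤ k := by
    by_contra! hlt
    exact hne.1 (h.eq_zero_of_lt_r h₀ hlt)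
  have := hlow (n - 4 * ρ - k) (by omega) (by omega) hne.2
  rw [Nat.dvd_sub_iff_left (by omega) hρk, Nat.dvd_sub_iff_left (by omega)
    (Nat.dvd_mul_left ρ 4)] at this
  exact hρn this

lemma false_of_not_dvd (h : TwoThreeSystem n ρ η z) : False := by
  have hρ := h.pos
  have hn := h.eight_mul_lt
  have hlt := h.add_five_mul_lt_of_not_dvd he₅ hen hz he hlow
  obtain ⟨ht2, hd2⟩ := h.z_two
  have hz1 : z ρ = 0 := h.eq_zero_of_lt_r hρ (by omega)
  have c₀ := innerConv_add_mul (j := 0) hρ he hlow (by omega)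
  have c₁ := innerConv_add_mul (j := 1) hρ he hlow (by omega)
  have c₂ := innerConv_add_mul (j := 2) hρ he hlow (by omega)
  have c₃ := innerConv_add_mul (j := 3) hρ he hlow (by omega)
  have c₅ := innerConv_add_mul (j := 5) hρ he hlow (by omega)
  have hform1 : ∀ x, hyperbolicForm 0 x = 0 := fun x => hyperbolicForm_eq_zero (Or.inl rfl)
  simp only [Finset.sum_range_succ, Finset.sum_range_zero, Nat.reduceAdd, Nat.reduceSub, zero_mul,
    one_mul, mul_zero, zero_add, add_zero, hz1, hform1] at c₀ c₁ c₂ c₃ c₅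
  have ht := (h.fst_eq_zero_of_innerConv (by omega) hen c₀).1
  have hc : 2 * e ≠ n := by
    rintro rfl
    have h6 : e ≠ 6 * ρ := fun h6 => he (h6 ▸ Nat.dvd_mul_left ρ 6)
    have E := h.fst_eq (p := e + 2 * ρ) (by omega) (by omega) (by omega) (by omega)
    have hm : z (e - 2 * ρ) = 0 := by
      by_contra hne
      have := hlow _ (by omega) (by omega) hne
      rw [Nat.dvd_sub_iff_left (by omega) (Nat.dvd_mul_left ρ 2)] at this
      exact he this
    rw [c₂, hyperbolicForm, ht2, h.eq_zero_mirror (k := e - 2 * ρ) (by omega) hm,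
      Prod.fst_zero] at E
    rw [Ne, Prod.ext_iff, Prod.fst_zero, Prod.snd_zero] at hz
    rcases hd2 with x | x <;> rw [x] at E <;> omega
  exact h.false_of_innerConv (by omega) hlt ht
    (h.snd_of_ne_zero (by omega) hen hc ht hz)
    (h.fst_eq_zero_of_innerConv (by omega) (by omega) c₁).1 c₂ c₃ (by rw [c₅, sub_self]; simp)

end

lemma dvd_of_ne_zero (h : TwoThreeSystem n ρ η z) {k : ℕ} (h₀ : 0 < k) (hkn : k < n)
    (hz : z k ≠ 0) : ρ ∣ k := by
  induction k using Nat.strong_induction_on with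
  | _ k ih =>
    by_contra hρk
    have hne : ∀ i, k ≠ i * ρ := fun i hi => hρk (hi ▸ Nat.dvd_mul_left ρ i)
    have h2 := hne 2
    have h3 := hne 3
    have h4 := hne 4
    have h5 := hne 5
    have hk₅ : 5 * ρ < k := by
      by_contra! hle
      rcases lt_or_gt_of_ne h4 with hlt | hgt
      · exact hz (h.eq_zero_of_lt_four_of_ne h₀ hlt h2 h3)
      · exact hz (h.eq_zero_of_lt_five hgt (by omega))
    exact h.false_of_not_dvd hk₅ hkn hz hρk fun j hj₀ hjk hzj => ih j hjk hj₀ (by omega) hzj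

end TwoThreeSystem

/-! ### The finite search -/

/-- The list `[zₚ, …, z₁]`. -/
def window (z : ℕ → ℤ × ℤ) : ℕ → List (ℤ × ℤ)
  | 0 => []
  | p + 1 => z (p + 1) :: window z p

/-- The value of `innerConv z (p + 1)` computed from the window `w = [zₚ, …, z₁]`. -/
def windowConv (w : List (ℤ × ℤ)) : ℤ := (List.zipWith hyperbolicForm w w.reverse).sum

/-- The sum of the weights of the entries of a window. -/
def windowWeight (w : List (ℤ × ℤ)) : ℤ := (w.map weight).sum

/-- The one-step extensions of a window that satisfy `ReciprocalSystem.conv_eq`, the parity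
condition and `|d| ≤ 6`, at an index `p` with `p + 2 * r ≠ n`. -/
def extensions (r : ℕ) (ε : ℤ) (w : List (ℤ × ℤ)) : List (List (ℤ × ℤ)) :=
  let c := windowConv w + if w.length + 1 = 2 * r then 4 * ε else 0
  if 8 ∣ c then
    ([-6, -5, -4, -3, -2, -1, 0, 1, 2, 3, 4, 5, 6].filter (2 ∣ c / 8 + ·)).map
      fun d => (c / 8, d) :: w
  else []

/-- The windows reached from `start` by `k` extensions of total weight at most `20`. -/
def lightWindows (r : ℕ) (ε : ℤ) (start : List (List (ℤ × ℤ))) : ℕ → List (List (ℤ × ℤ))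
  | 0 => start
  | k + 1 => ((lightWindows r ε start k).flatMap (extensions r ε)).filter (windowWeight · ≤ 20)

/-- The window `[zₙ₋₁, …, z₁]` rebuilt from `w = [zₚ, …, z₁]` and `u = [z_q, …, z₁]`, where
`p + q + 1 = n`, by the mirror symmetry with `s = ε * η`. -/
def mirrorWindow (s : ℤ) (w u : List (ℤ × ℤ)) : List (ℤ × ℤ) :=
  (w.map fun x => (s * x.1, -s * x.2)).reverse ++ u

/-- The equations `ReciprocalSystem.conv_eq` for the entries of a window. -/
def SolvesConvEq (n r : ℕ) (ε η : ℤ) : List (ℤ × ℤ) → Prop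
  | [] => True
  | x :: w => (8 * x.1 = windowConv w + (if w.length + 1 = 2 * r then 4 * ε else 0)
      + if w.length + 1 + 2 * r = n then 16 * η else 0) ∧ SolvesConvEq n r ε η w

instance SolvesConvEq.decidable (n r : ℕ) (ε η : ℤ) :
    (w : List (ℤ × ℤ)) → Decidable (SolvesConvEq n r ε η w)
  | [] => inferInstanceAs (Decidable True)
  | _ :: w =>
    have := SolvesConvEq.decidable n r ε η w
    inferInstanceAs (Decidable (_ ∧ _))

/-- The conditions `norm` and `conv_eq` of a `ReciprocalSystem` with halves `w` and `u`. -/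
def IsCompletion (r : ℕ) (ε η : ℤ) (w u : List (ℤ × ℤ)) : Prop :=
  windowWeight (mirrorWindow (ε * η) w u) = 40 ∧
    SolvesConvEq (w.length + u.length + 1) r ε η (mirrorWindow (ε * η) w u)

instance (r : ℕ) (ε η : ℤ) (w u : List (ℤ × ℤ)) : Decidable (IsCompletion r ε η w u) :=
  inferInstanceAs (Decidable (_ ∧ _))

lemma length_window (z : ℕ → ℤ × ℤ) (p : ℕ) : (window z p).length = p := by
  induction p with
  | zero => rfl
  | succ p ih => rw [window, List.length_cons, ih]

lemma getElem_window (z : ℕ → ℤ × ℤ) (p : ℕ) :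
    ∀ (i : ℕ) (hi : i < (window z p).length), (window z p)[i] = z (p - i) := by
  induction p with
  | zero => simp [window]
  | succ p ih =>
    rintro (_ | i) hi
    · rfl
    · simp only [window, List.getElem_cons_succ, ih, Nat.add_sub_add_right]

lemma sum_map_window (z : ℕ → ℤ × ℤ) (f : ℤ × ℤ → ℤ) (p : ℕ) :
    ((window z p).map f).sum = ∑ k ∈ Finset.Ioo 0 (p + 1), f (z k) := by
  induction p with
  | zero => rfl
  | succ p ih =>
    have hIoo : Finset.Ioo 0 (p + 1 + 1) = insert (p + 1) (Finset.Ioo 0 (p + 1)) := by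
      ext k
      simp only [Finset.mem_Ioo, Finset.mem_insert]
      omega
    rw [window, List.map_cons, List.sum_cons, ih, hIoo, Finset.sum_insert (by simp)]

lemma windowConv_window (z : ℕ → ℤ × ℤ) (p : ℕ) :
    windowConv (window z p) = innerConv z (p + 1) := by
  have hzip : List.zipWith hyperbolicForm (window z p) (window z p).reverse
      = List.ofFn fun i : Fin p => hyperbolicForm (z (p - i)) (z (i + 1)) := by
    refine List.ext_getElem (by simp [length_window]) fun i hi _ => ?_
    simp only [List.length_zipWith, List.length_reverse, length_window, min_self] at hi
    simp only [List.getElem_zipWith, List.getElem_reverse, getElem_window, length_window,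
      List.getElem_ofFn]
    congr 2
    omega
  rw [windowConv, hzip, List.sum_ofFn,
    Fin.sum_univ_eq_sum_range fun i => hyperbolicForm (z (p - i)) (z (i + 1)), innerConv]
  refine Finset.sum_nbij' (· + 1) (· - 1) ?_ ?_ ?_ ?_ ?_ <;> intro k hk <;>
    simp only [Finset.mem_range, Finset.mem_Ioo] at hk ⊢
  any_goals omega
  rw [hyperbolicForm_comm, Nat.add_sub_add_right]

namespace ReciprocalSystem

variable {n r : ℕ} {ε η : ℤ} {z : ℕ → ℤ × ℤ}

lemma window_succ_mem_extensions (h : ReciprocalSystem n r ε η z) {p : ℕ} (hp : p + 1 < n)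
    (hr : p + 1 + 2 * r ≠ n) : window z (p + 1) ∈ extensions r ε (window z p) := by
  have ht := h.conv_eq p.succ_pos hp
  rw [if_neg hr, add_zero] at ht
  have hweight := h.sum_weight_le (s := {p + 1}) (by simpa using hp)
  rw [Finset.sum_singleton, weight] at hweight
  have hd : -6 ≤ (z (p + 1)).2 ∧ (z (p + 1)).2 ≤ 6 := by
    constructor <;> nlinarith [sq_nonneg (z (p + 1)).1]
  have hmem : (z (p + 1)).2 ∈ [-6, -5, -4, -3, -2, -1, 0, 1, 2, 3, 4, 5, (6 : ℤ)] := by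
    simp only [List.mem_cons]
    omega
  simp only [extensions, length_window, windowConv_window, ← ht, dvd_mul_right, if_true,
    Int.mul_ediv_cancel_left _ (show (8 : ℤ) ≠ 0 by decide)]
  exact List.mem_map.2 ⟨_, List.mem_filter.2 ⟨hmem, decide_eq_true (h.parity (p + 1))⟩, rfl⟩

lemma window_mem_lightWindows (h : ReciprocalSystem n r ε η z) (hn : 4 * r < n) {a : ℕ}
    {start : List (List (ℤ × ℤ))} (hstart : window z a ∈ start) :
    ∀ k, 2 * (a + k) < n → window z (a + k) ∈ lightWindows r ε start k
  | 0, _ => hstart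
  | k + 1, hk => by
    have hweight : windowWeight (window z (a + (k + 1))) ≤ 20 := by
      rw [windowWeight, sum_map_window]
      exact h.sum_lower_half_weight_le fun i hi => by simp only [Finset.mem_Ioo] at hi; omega
    exact List.mem_filter.2 ⟨List.mem_flatMap.2
      ⟨_, h.window_mem_lightWindows hn hstart k (by omega),
        h.window_succ_mem_extensions (by omega) (by omega)⟩, decide_eq_true hweight⟩

lemma window_eq_mirrorWindow (h : ReciprocalSystem n r ε η z) {p q : ℕ} (hpq : p + q + 1 = n) :
    window z (n - 1) = mirrorWindow (ε * η) (window z p) (window z q) := by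
  refine List.ext_getElem (by simp [mirrorWindow, length_window]; omega) fun i hi _ => ?_
  rw [length_window] at hi
  rw [getElem_window]
  rcases lt_or_ge i p with hip | hip
  · have hi' : n - 1 - i + (p - (p - 1 - i)) = n := by omega
    simp only [mirrorWindow]
    rw [List.getElem_append_left (by simpa [length_window] using hip)]
    simp only [List.getElem_reverse, List.getElem_map, List.length_map, getElem_window,
      length_window]
    exact Prod.ext (h.fst_mirror hi') (h.snd_mirror hi')
  · simp only [mirrorWindow]
    rw [List.getElem_append_right (by simpa [length_window] using hip)]
    simp only [List.length_reverse, List.length_map, getElem_window, length_window]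
    congr 1
    omega

lemma solvesConvEq_window (h : ReciprocalSystem n r ε η z) :
    ∀ p, p < n → SolvesConvEq n r ε η (window z p)
  | 0, _ => trivial
  | p + 1, hp => by
    rw [window, SolvesConvEq, windowConv_window, length_window]
    exact ⟨h.conv_eq p.succ_pos hp, h.solvesConvEq_window p (by omega)⟩

lemma isCompletion_window (h : ReciprocalSystem n r ε η z) {p q : ℕ} (hpq : p + q + 1 = n) :
    IsCompletion r ε η (window z p) (window z q) := by
  rw [IsCompletion, ← h.window_eq_mirrorWindow hpq, length_window, length_window, hpq,
    windowWeight, sum_map_window, Nat.sub_add_cancel (by omega)]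
  exact ⟨h.norm, h.solvesConvEq_window _ (by omega)⟩

lemma eq_of_search (h : ReciprocalSystem n r ε η z) (hn : 4 * r < n) {a b N : ℕ}
    {start : List (List (ℤ × ℤ))} (ha : 2 * a < n) (hstart : window z a ∈ start)
    (hfinite : lightWindows r ε start b = [])
    (hsearch : ∀ k < b, ∀ w ∈ lightWindows r ε start k, ∀ u ∈ w :: extensions r ε w,
      ∀ η ∈ [1, -1], IsCompletion r ε η w u → w.length + u.length + 1 = N) : n = N := by
  have hlight := h.window_mem_lightWindows hn hstart
  have hnb : n ≤ 2 * (a + b) := by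
    by_contra! hnb
    have := hlight b hnb
    simp [hfinite] at this
  obtain ⟨k, hk⟩ : ∃ k, a + k = (n - 1) / 2 := Nat.exists_eq_add_of_le (by omega) |>.imp
    fun _ => Eq.symm
  have hhalf : window z (n / 2) ∈ window z (a + k) :: extensions r ε (window z (a + k)) := by
    rcases n.even_or_odd' with ⟨c, rfl | rfl⟩
    · have := h.window_succ_mem_extensions (p := a + k) (by omega) (by omega)
      rw [show a + k + 1 = 2 * c / 2 by omega] at this
      exact List.mem_cons_of_mem _ this
    · rw [show a + k = (2 * c + 1) / 2 by omega]
      exact List.mem_cons_self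
  have := hsearch k (by omega) _ (hlight k (by omega)) _ hhalf η (by simpa using h.sign_η)
    (h.isCompletion_window (by omega))
  rw [length_window, length_window] at this
  omega

end ReciprocalSystem

/-! ### Rescaling and the exceptional families -/

lemma sum_Ioo_mul_right {M : Type*} [AddCommMonoid M] {ρ : ℕ} (hρ : 0 < ρ) (N : ℕ) (f : ℕ → M)
    (hf : ∀ k, 0 < k → k < N * ρ → ¬ ρ ∣ k → f k = 0) :
    ∑ k ∈ Finset.Ioo 0 (N * ρ), f k = ∑ k ∈ Finset.Ioo 0 N, f (k * ρ) := by
  rw [← Finset.sum_image (g := (· * ρ)) fun _ _ _ _ => Nat.eq_of_mul_eq_mul_right hρ]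
  refine (Finset.sum_subset (fun _ hk => ?_) fun k hk hks => ?_).symm
  · obtain ⟨i, hi, rfl⟩ := Finset.mem_image.1 hk
    rw [Finset.mem_Ioo] at hi ⊢
    exact ⟨Nat.mul_pos hi.1 hρ, Nat.mul_lt_mul_of_pos_right hi.2 hρ⟩
  · rw [Finset.mem_Ioo] at hk
    refine hf k hk.1 hk.2 fun ⟨i, hi⟩ => hks (Finset.mem_image.2 ⟨i, ?_, by rw [hi, mul_comm]⟩)
    rw [hi, mul_comm ρ] at hk
    exact Finset.mem_Ioo.2 ⟨Nat.pos_of_mul_pos_right hk.1, Nat.lt_of_mul_lt_mul_right hk.2⟩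

namespace ReciprocalSystem

variable {n r : ℕ} {ε η : ℤ} {z : ℕ → ℤ × ℤ}

lemma scale {N c ρ : ℕ} (h : ReciprocalSystem (N * ρ) (c * ρ) ε η z)
    (hdvd : ∀ k, 0 < k → k < N * ρ → z k ≠ 0 → ρ ∣ k) :
    ReciprocalSystem N c ε η fun k => z (k * ρ) := by
  have hρ : 0 < ρ := Nat.pos_of_mul_pos_left h.r_pos
  have hmul {a b : ℕ} : a * ρ = b * ρ ↔ a = b := Nat.mul_left_inj hρ.ne'
  have hlt {a b : ℕ} : a * ρ < b * ρ ↔ a < b := Nat.mul_lt_mul_right hρ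
  have hzero : ∀ k, 0 < k → k < N * ρ → ¬ ρ ∣ k → z k = 0 := fun k h₀ hk hρk => by
    by_contra hz
    exact hρk (hdvd k h₀ hk hz)
  refine ⟨Nat.pos_of_mul_pos_right h.r_pos, ?_, h.sign_ε, h.sign_η, ?_, ?_, ?_, ?_, ?_,
    fun k => h.parity _, ?_, h.ord⟩
  · rw [← hlt, mul_assoc]
    exact h.two_mul_lt
  · rw [zero_mul]
    exact h.zero
  · exact fun hjk => h.fst_mirror (by rw [← add_mul, hjk])
  · exact fun hjk => h.snd_mirror (by rw [← add_mul, hjk])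
  · intro p h₀ hp
    have hconv : innerConv z (p * ρ) = innerConv (fun k => z (k * ρ)) p := by
      rw [innerConv, sum_Ioo_mul_right hρ _ _ fun k hk₀ hk hρk => hyperbolicForm_eq_zero
        (Or.inl (hzero k hk₀ (hk.trans (hlt.2 hp)) hρk))]
      simp only [innerConv, Nat.sub_mul]
    have E := h.conv_eq (Nat.mul_pos h₀ hρ) (hlt.2 hp)
    simp only [← mul_assoc, ← add_mul, hmul] at E
    rw [E, hconv]
  · rw [← h.norm, sum_Ioo_mul_right hρ _ _ fun k h₀ hk hρk => ?_]
    rw [hzero k h₀ hk hρk]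
    rfl
  · exact fun h₀ hp => h.low (Nat.mul_pos h₀ hρ) (hlt.2 hp)

lemma dvd_n (h : ReciprocalSystem n r ε η z) {ρ : ℕ} (hρr : ρ ∣ r)
    (hdvd : ∀ k, 0 < k → k < n → z k ≠ 0 → ρ ∣ k) : ρ ∣ n := by
  have hr := h.r_pos
  have hn := h.two_mul_lt
  have hρ := hdvd (n - r) (by omega) (by omega) fun hz =>
    h.z_r_ne_zero (h.eq_zero_mirror (by omega) hz)
  rwa [← Nat.dvd_add_left hρr, Nat.sub_add_cancel (by omega)] at hρ

end ReciprocalSystem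

namespace ReducedSystem

variable {n r : ℕ} {ε η : ℤ} {z : ℕ → ℤ × ℤ}

lemma false_of_gap (h : ReducedSystem n r ε η z) (hn : 4 * r < n)
    (hgap : ∀ k, r < k → k < 2 * r → z k = 0) : False := by
  have hdvd : ∀ k, 0 < k → k < n → z k ≠ 0 → r ∣ k := fun k => h.dvd_of_gap hn hgap
  obtain ⟨ht₁, hd₁⟩ := h.z_r (by omega)
  obtain ⟨ht₂, hd₂⟩ := h.z_two_mul_r hn hgap
  obtain rfl := h.sign_eq_neg_one hn hgap
  obtain ⟨N, rfl⟩ := exists_eq_mul_left_of_dvd (h.dvd_n dvd_rfl hdvd)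
  have hN : 4 < N := Nat.lt_of_mul_lt_mul_right hn
  have hscale := (show ReciprocalSystem (N * r) (1 * r) (-1) η z by
    rw [one_mul]; exact h.toReciprocalSystem).scale hdvd
  have hstart : window (fun k => z (k * r)) 2
      ∈ ([2, -2] ×ˢ [2, -2]).map fun d => [((0 : ℤ), d.1), ((0 : ℤ), d.2)] := by
    have hz₁ : z r = (0, 2) ∨ z r = (0, -2) := hd₁.imp (Prod.ext ht₁) (Prod.ext ht₁)
    have hz₂ : z (2 * r) = (0, 2) ∨ z (2 * r) = (0, -2) := hd₂.imp (Prod.ext ht₂) (Prod.ext ht₂)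
    rcases hz₁ with hz₁ | hz₁ <;> rcases hz₂ with hz₂ | hz₂ <;> simp [window, hz₁, hz₂]
  exact absurd (hscale.eq_of_search (N := 0) (b := 8) (by omega) (by omega) hstart
    (by decide +kernel) (by decide +kernel)) (by omega)

end ReducedSystem

lemma TwoThreeSystem.eq_eleven_mul {n ρ : ℕ} {η : ℤ} {z : ℕ → ℤ × ℤ}
    (h : TwoThreeSystem n ρ η z) : n = 11 * ρ := by
  have hdvd : ∀ k, 0 < k → k < n → z k ≠ 0 → ρ ∣ k := fun k => h.dvd_of_ne_zero
  have hρ := h.pos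
  obtain ⟨ht₂, hd₂⟩ := h.z_two
  have ht₃ := h.fst_eq_zero_of_lt_four (k := 3 * ρ) (by omega) (by omega)
  have hz₁ := h.eq_zero_of_lt_three (k := ρ) hρ (by omega) (by omega)
  obtain ⟨N, rfl⟩ := exists_eq_mul_left_of_dvd (h.dvd_n (Nat.dvd_mul_left ρ 2) hdvd)
  have hN : 8 < N := Nat.lt_of_mul_lt_mul_right h.eight_mul_lt
  have hstart : window (fun k => z (k * ρ)) 3
      ∈ ([2, -2] ×ˢ [2, -2]).map fun d => [((0 : ℤ), d.1), ((0 : ℤ), d.2), 0] := by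
    have hz₂ : z (2 * ρ) = (0, 2) ∨ z (2 * ρ) = (0, -2) := hd₂.imp (Prod.ext ht₂) (Prod.ext ht₂)
    have hz₃ : z (3 * ρ) = (0, 2) ∨ z (3 * ρ) = (0, -2) :=
      h.snd_three.imp (Prod.ext ht₃) (Prod.ext ht₃)
    rcases hz₂ with hz₂ | hz₂ <;> rcases hz₃ with hz₃ | hz₃ <;> simp [window, hz₁, hz₂, hz₃]
  rw [(h.toReciprocalSystem.scale hdvd).eq_of_search (N := 11) (b := 12) (by omega) (by omega)
    hstart (by decide +kernel) (by decide +kernel)]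

lemma ReducedSystem.eq_mul {n r : ℕ} {ε η : ℤ} {z : ℕ → ℤ × ℤ}
    (h : ReducedSystem n r ε η z) : (n = 3 * r ∨ 2 * n = 11 * r) ∧ ε = 1 := by
  by_cases h3 : n = 3 * r ∧ ε = 1
  · exact ⟨Or.inl h3.1, h3.2⟩
  have hn := h.four_mul_lt h3
  have hgap : ∃ q, (r < q ∧ q < 2 * r) ∧ z q ≠ 0 := by
    by_contra! hgap
    exact h.false_of_gap hn fun k h₁ h₂ => hgap k ⟨h₁, h₂⟩
  classical
  obtain ⟨⟨hrq, hqr⟩, hq⟩ := Nat.find_spec hgap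
  have hmin : ∀ k, r < k → k < Nat.find hgap → z k = 0 := fun k hrk hkq => by
    by_contra hk
    exact Nat.find_min hgap hkq ⟨⟨hrk, by omega⟩, hk⟩
  generalize Nat.find hgap = q at hrq hqr hq hmin
  obtain ⟨hqr3, rfl, hdq, hodd⟩ := h.two_mul_eq_three_mul_r hn hrq hqr hq hmin
  obtain ⟨ρ, rfl⟩ : 2 ∣ r := by omega
  obtain rfl : q = 3 * ρ := by omega
  have hn11 := TwoThreeSystem.eq_eleven_mul
    ⟨h, by omega, hmin, hdq, by rwa [← mul_assoc] at hodd⟩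
  exact ⟨Or.inr (by omega), rfl⟩

theorem ReciprocalSystem.eq_mul {n r : ℕ} {ε η : ℤ} {z : ℕ → ℤ × ℤ}
    (h : ReciprocalSystem n r ε η z) :
    ((n = 3 * r ∨ 2 * n = 11 * r) ∧ ε = 1) ∨ (n = 5 * r ∧ ε = -1) := by
  by_cases hred : ∀ p, 0 < p → 2 * p < n → (z p).1 = 0 →
      (z p).2 = 0 ∨ (z p).2 = 2 ∨ (z p).2 = -2
  · exact Or.inl (ReducedSystem.eq_mul ⟨h, fun h₀ => hred _ h₀⟩)
  · push Not at hred
    obtain ⟨i, hi, hin, ht, hd⟩ := hred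
    exact Or.inr (h.eq_five_mul_of_large hi hin ht (by tauto))

/-! ### Constant coefficients and odd coefficients -/

lemma one_lt_norm_coeff_zero {p : ℂ[X]} (hp : p.Monic) (hdeg : 0 < p.natDegree)
    (hroots : ∀ z, p.IsRoot z → 1 < ‖z‖) : 1 < ‖p.coeff 0‖ := by
  have hsplits := IsAlgClosed.splits p
  have hne : p.roots ≠ ∅ := fun h => by
    rw [hsplits.natDegree_eq_card_roots, h] at hdeg
    exact hdeg.ne rfl
  rw [hsplits.coeff_zero_eq_prod_roots_of_monic hp, norm_mul, norm_pow, norm_neg, norm_one,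
    one_pow, one_mul]
  refine Multiset.prod_induction_nonempty (fun z : ℂ => 1 < ‖z‖) (fun a b ha hb => ?_) hne
    fun z hz => hroots z (isRoot_of_mem_roots hz)
  rw [norm_mul]
  exact one_lt_mul_of_lt_of_le ha hb.le

lemma one_lt_abs_coeff_zero {p : ℤ[X]} (hp : p.Monic) (hdeg : 0 < p.natDegree)
    (hroots : ∀ z : ℂ, aeval z p = 0 → 1 < ‖z‖) : 1 < |p.coeff 0| := by
  have h := one_lt_norm_coeff_zero (hp.map (Int.castRingHom ℂ)) (by rwa [hp.natDegree_map])
    fun z hz => hroots z (by rwa [IsRoot.def, eval_map] at hz)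
  rw [coeff_map, eq_intCast, Complex.norm_intCast] at h
  exact_mod_cast h

lemma coeff_mirror_of_add_eq {R : Type*} [Semiring R] {p : R[X]} (h₀ : p.coeff 0 ≠ 0) {j k : ℕ}
    (hjk : j + k = p.natDegree) : p.mirror.coeff j = p.coeff k := by
  rw [coeff_mirror, natTrailingDegree_eq_zero.2 (Or.inr h₀), add_zero, revAt_le (by omega)]
  congr 1
  omega

/-- The first odd coefficient of `p` is that of `X ^ a`. -/
def HasOddOrder (p : ℤ[X]) (a : ℕ) : Prop := (∀ i < a, 2 ∣ p.coeff i) ∧ ¬ 2 ∣ p.coeff a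

lemma hasOddOrder_of_not_two_dvd {p : ℤ[X]} (h : ¬ 2 ∣ p.coeff 0) : HasOddOrder p 0 :=
  ⟨fun i hi => absurd hi i.not_lt_zero, h⟩

lemma hasOddOrder_iff {p : ℤ[X]} {a : ℕ} :
    HasOddOrder p a ↔ p.map (Int.castRingHom (ZMod 2)) ≠ 0 ∧
      (p.map (Int.castRingHom (ZMod 2))).natTrailingDegree = a := by
  have hdvd (i : ℕ) : 2 ∣ p.coeff i ↔ (p.map (Int.castRingHom (ZMod 2))).coeff i = 0 := by
    rw [coeff_map, eq_intCast, ZMod.intCast_zmod_eq_zero_iff_dvd]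
    rfl
  simp only [HasOddOrder, hdvd]
  refine ⟨fun ⟨hlt, ha⟩ => ?_, fun ⟨hne, ha⟩ => ?_⟩
  · have hne : p.map (Int.castRingHom (ZMod 2)) ≠ 0 := fun h => ha (by rw [h, coeff_zero])
    exact ⟨hne, (natTrailingDegree_le_of_ne_zero ha).antisymm
      (le_natTrailingDegree hne fun i hi => hlt i hi)⟩
  · subst ha
    exact ⟨fun i hi => coeff_eq_zero_of_lt_natTrailingDegree hi,
      trailingCoeff_nonzero_iff_nonzero.2 hne⟩

lemma exists_hasOddOrder_of_monic {p : ℤ[X]} (hp : p.Monic) : ∃ a, HasOddOrder p a :=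
  ⟨_, hasOddOrder_iff.2 ⟨(hp.map _).ne_zero, rfl⟩⟩

namespace HasOddOrder

variable {p q : ℤ[X]} {a b : ℕ}

lemma unique (ha : HasOddOrder p a) (hb : HasOddOrder p b) : a = b :=
  (hasOddOrder_iff.1 ha).2.symm.trans (hasOddOrder_iff.1 hb).2

lemma pos (hp : HasOddOrder p a) (h₀ : 2 ∣ p.coeff 0) : 0 < a :=
  Nat.pos_of_ne_zero fun ha => hp.2 (ha ▸ h₀)

lemma mul (hp : HasOddOrder p a) (hq : HasOddOrder q b) : HasOddOrder (p * q) (a + b) := by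
  rw [hasOddOrder_iff] at hp hq ⊢
  rw [Polynomial.map_mul, natTrailingDegree_mul hp.1 hq.1, hp.2, hq.2]
  exact ⟨mul_ne_zero hp.1 hq.1, rfl⟩

lemma four_dvd_coeff_zero (hp : HasOddOrder p a) (hq : HasOddOrder q b) (hab : a < b)
    (h : 4 ∣ (p * q).coeff a) : 4 ∣ q.coeff 0 := by
  rw [coeff_mul, Finset.Nat.sum_antidiagonal_eq_sum_range_succ fun i j => p.coeff i * q.coeff j,
    Finset.sum_range_succ, Nat.sub_self] at h
  have hcop : IsCoprime 4 (p.coeff a) :=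
    (Int.prime_two.coprime_iff_not_dvd.2 hp.2).pow_left (m := 2)
  refine hcop.dvd_of_dvd_mul_left ((dvd_add_right (Finset.dvd_sum fun i hi => ?_)).1 h)
  exact mul_dvd_mul (hp.1 i (Finset.mem_range.1 hi)) (hq.1 _ (by omega))

end HasOddOrder

/-! ### From a factorisation to a `ReciprocalSystem` -/

lemma sum_antidiagonal_hyperbolicForm (z : ℕ → ℤ × ℤ) {p : ℕ} (hp : 0 < p) :
    ∑ x ∈ Finset.HasAntidiagonal.antidiagonal p, hyperbolicForm (z x.1) (z x.2)
      = 2 * hyperbolicForm (z 0) (z p) + innerConv z p := by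
  rw [Finset.Nat.sum_antidiagonal_eq_sum_range_succ fun i j => hyperbolicForm (z i) (z j),
    Finset.sum_range_succ, Finset.range_eq_Ico, Finset.sum_eq_sum_Ico_succ_bot hp, Nat.sub_self,
    Nat.sub_zero, hyperbolicForm_comm (z p), innerConv,
    show Finset.Ico (0 + 1) p = Finset.Ioo 0 p from rfl]
  ring

/-- The coefficients of `P + e * P.mirror` and `P - e * P.mirror`. -/
noncomputable def reciprocalPair (P : ℤ[X]) (e : ℤ) (k : ℕ) : ℤ × ℤ :=
  (P.coeff k + e * P.mirror.coeff k, P.coeff k - e * P.mirror.coeff k)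

lemma two_mul_form_add_innerConv_reciprocalPair (P : ℤ[X]) (e : ℤ) {p : ℕ} (hp : 0 < p) :
    2 * hyperbolicForm (reciprocalPair P e 0) (reciprocalPair P e p)
      + innerConv (reciprocalPair P e) p = -4 * e * (P * P.mirror).coeff p := by
  have hform (i j : ℕ) : hyperbolicForm (reciprocalPair P e i) (reciprocalPair P e j)
      = -2 * e * (P.coeff i * P.mirror.coeff j + P.mirror.coeff i * P.coeff j) := by
    simp only [hyperbolicForm, reciprocalPair]
    ring
  rw [← sum_antidiagonal_hyperbolicForm _ hp]
  simp only [hform]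
  rw [← Finset.mul_sum, Finset.sum_add_distrib, ← coeff_mul, ← coeff_mul, mul_comm P.mirror]
  ring

lemma eight_mul_fst_reciprocalPair {P : ℤ[X]} {e : ℤ} (h₀ : reciprocalPair P e 0 = (4, 0)) {p : ℕ}
    (hp : 0 < p) : 8 * (reciprocalPair P e p).1
      = innerConv (reciprocalPair P e) p + 4 * e * (P * P.mirror).coeff p := by
  have h := two_mul_form_add_innerConv_reciprocalPair P e hp
  rw [h₀, hyperbolicForm] at h
  linear_combination -h

lemma sum_range_coeff_sq (P : ℤ[X]) (h₀ : P.coeff 0 ≠ 0) :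
    ∑ k ∈ Finset.range (P.natDegree + 1), P.coeff k ^ 2 = (P * P.mirror).coeff P.natDegree := by
  have h := coeff_mul_mirror P
  rw [natTrailingDegree_eq_zero.2 (Or.inr h₀), add_zero] at h
  rw [h, sum_over_range _ fun _ => zero_pow two_ne_zero]

lemma sum_weight_reciprocalPair {P : ℤ[X]} (h₀ : P.coeff 0 ≠ 0) {e : ℤ} (he : e ^ 2 = 1) :
    ∑ k ∈ Finset.range (P.natDegree + 1), weight (reciprocalPair P e k)
      = 4 * (P * P.mirror).coeff P.natDegree := by
  have hweight : ∀ k ∈ Finset.range (P.natDegree + 1), weight (reciprocalPair P e k)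
      = 2 * P.coeff k ^ 2 + 2 * P.coeff (P.natDegree + 1 - 1 - k) ^ 2 := fun k hk => by
    rw [Finset.mem_range] at hk
    have hmirror := coeff_mirror_of_add_eq h₀ (j := k) (k := P.natDegree + 1 - 1 - k) (by omega)
    rw [weight, reciprocalPair, ← hmirror]
    linear_combination 2 * P.mirror.coeff k ^ 2 * he
  rw [Finset.sum_congr rfl hweight, Finset.sum_add_distrib, ← Finset.mul_sum, ← Finset.mul_sum,
    Finset.sum_range_reflect fun k => P.coeff k ^ 2, sum_range_coeff_sq P h₀]
  ring

lemma fst_reciprocalPair_mirror {P : ℤ[X]} (h₀ : P.coeff 0 ≠ 0) {e : ℤ} (he : e ^ 2 = 1) {j k : ℕ}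
    (hjk : j + k = P.natDegree) : (reciprocalPair P e j).1 = e * (reciprocalPair P e k).1 := by
  simp only [reciprocalPair]
  rw [coeff_mirror_of_add_eq h₀ hjk, coeff_mirror_of_add_eq h₀ ((add_comm k j).trans hjk)]
  linear_combination -P.coeff j * he

lemma snd_reciprocalPair_mirror {P : ℤ[X]} (h₀ : P.coeff 0 ≠ 0) {e : ℤ} (he : e ^ 2 = 1) {j k : ℕ}
    (hjk : j + k = P.natDegree) : (reciprocalPair P e j).2 = -e * (reciprocalPair P e k).2 := by
  simp only [reciprocalPair]
  rw [coeff_mirror_of_add_eq h₀ hjk, coeff_mirror_of_add_eq h₀ ((add_comm k j).trans hjk)]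
  linear_combination -P.coeff j * he

lemma sum_Ioo_weight_reciprocalPair {P : ℤ[X]} (h₀ : P.coeff 0 ≠ 0) {e : ℤ} (he : e ^ 2 = 1)
    (hdeg : 0 < P.natDegree) :
    ∑ k ∈ Finset.Ioo 0 P.natDegree, weight (reciprocalPair P e k)
      = 4 * (P * P.mirror).coeff P.natDegree - 2 * weight (reciprocalPair P e 0) := by
  have hlast : weight (reciprocalPair P e P.natDegree) = weight (reciprocalPair P e 0) := by
    have hjk := add_zero P.natDegree
    simp only [weight, fst_reciprocalPair_mirror h₀ he hjk, snd_reciprocalPair_mirror h₀ he hjk]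
    linear_combination ((reciprocalPair P e 0).1 ^ 2 + (reciprocalPair P e 0).2 ^ 2) * he
  have h := sum_weight_reciprocalPair h₀ he
  rw [Finset.sum_range_succ, Finset.range_eq_Ico, Finset.sum_eq_sum_Ico_succ_bot hdeg, hlast,
    show Finset.Ico (0 + 1) P.natDegree = Finset.Ioo 0 P.natDegree from rfl] at h
  linear_combination h

section Trinomial

variable {n m : ℕ} {ε₁ ε₂ : ℤ}

lemma one_lt_norm_of_aeval_trinomial (hε₁ : ε₁ = 1 ∨ ε₁ = -1) (hε₂ : ε₂ = 1 ∨ ε₂ = -1) {z : ℂ}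
    (hz : aeval z (trinomial 0 m n (4 * ε₂) ε₁ 1) = 0) : 1 < ‖z‖ := by
  by_contra! hle
  have h₄ : ‖(4 * ε₂ : ℂ)‖ = 4 := by rcases hε₂ with rfl | rfl <;> norm_num
  have h₁ : ‖(ε₁ : ℂ)‖ = 1 := by rcases hε₁ with rfl | rfl <;> norm_num
  have hzeq : (4 * ε₂ : ℂ) = -(ε₁ * z ^ m + z ^ n) := by
    rw [trinomial_def] at hz
    simp only [map_add, map_mul, aeval_X_pow, eq_intCast, map_intCast, map_ofNat,
      map_one, pow_zero, mul_one, one_mul] at hz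
    linear_combination hz
  have hlt : ‖(4 * ε₂ : ℂ)‖ ≤ 1 + 1 := by
    rw [hzeq, norm_neg]
    refine norm_add_le_of_le ?_ ?_
    · rw [norm_mul, h₁, one_mul, norm_pow]
      exact pow_le_one₀ (norm_nonneg z) hle
    · rw [norm_pow]
      exact pow_le_one₀ (norm_nonneg z) hle
  rw [h₄] at hlt
  norm_num at hlt

lemma exists_sign_coeff_zero (hε₁ : ε₁ = 1 ∨ ε₁ = -1) (hε₂ : ε₂ = 1 ∨ ε₂ = -1)
    (hm : 0 < m) (hmn : m < n) {g h : ℤ[X]} (hg : g.Monic) (hh : h.Monic)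
    (hdg : 0 < g.natDegree) (hdh : 0 < h.natDegree)
    (hgh : g * h = trinomial 0 m n (4 * ε₂) ε₁ 1) :
    ∃ s : ℤ, (s = 1 ∨ s = -1) ∧ g.coeff 0 = 2 * s ∧ h.coeff 0 = 2 * (s * ε₂) := by
  have hroot := fun z (hz : aeval z (g * h) = 0) =>
    one_lt_norm_of_aeval_trinomial hε₁ hε₂ (hgh ▸ hz)
  have hg₁ := one_lt_abs_coeff_zero hg hdg fun z hz => hroot z (by rw [map_mul, hz, zero_mul])
  have hh₁ := one_lt_abs_coeff_zero hh hdh fun z hz => hroot z (by rw [map_mul, hz, mul_zero])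
  have h₀ : g.coeff 0 * h.coeff 0 = 4 * ε₂ := by
    rw [← mul_coeff_zero, hgh, trinomial_trailing_coeff' hm hmn]
  have habs : |g.coeff 0| * |h.coeff 0| = 4 := by
    rw [← abs_mul, h₀]
    rcases hε₂ with rfl | rfl <;> norm_num
  have hg₂ : |g.coeff 0| = 2 := by nlinarith
  rcases (abs_eq zero_le_two).1 hg₂ with hs | hs <;> rw [hs] at h₀
  · exact ⟨1, by omega, by omega, by omega⟩
  · exact ⟨-1, by omega, by omega, by omega⟩

lemma coeff_trinomial_eq_zero {R : Type*} [Semiring R] {u v w : R} {k : ℕ} (h₀ : 0 < k)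
    (hk : k < m) (hmn : m < n) : (trinomial 0 m n u v w).coeff k = 0 := by
  rw [trinomial_def, coeff_add, coeff_add, coeff_C_mul_X_pow, coeff_C_mul_X_pow,
    coeff_C_mul_X_pow, if_neg h₀.ne', if_neg hk.ne, if_neg (hk.trans hmn).ne, add_zero, add_zero]

lemma coeff_trinomial_mul_mirror {R : Type*} [CommSemiring R] {u v w : R} (hu : u ≠ 0)
    (hw : w ≠ 0) (hm : 0 < m) (hmn : m < n) {k : ℕ} (h₀ : 0 < k) (hk : k ≤ n) :
    (trinomial 0 m n u v w * (trinomial 0 m n u v w).mirror).coeff k =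
      (if k = n then u ^ 2 + v ^ 2 + w ^ 2 else 0) + (if k = m then v * w else 0)
        + if k + m = n then u * v else 0 := by
  obtain ⟨d, rfl⟩ := Nat.exists_eq_add_of_le hmn.le
  have hexpand : trinomial 0 m (m + d) u v w * trinomial 0 d (m + d) w v u =
      C (u ^ 2 + v ^ 2 + w ^ 2) * X ^ (m + d) + C (v * w) * X ^ m + C (u * v) * X ^ d
        + (C (u * w) * X ^ 0 + C (v * w) * X ^ (m + d + d) + C (u * v) * X ^ (m + d + m)
          + C (u * w) * X ^ (m + d + (m + d))) := by
    simp only [trinomial_def, map_add, map_mul, map_pow, pow_add]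
    ring
  rw [trinomial_mirror hm hmn hu hw, Nat.add_sub_cancel_left, add_zero, hexpand]
  simp only [coeff_add, coeff_C_mul_X_pow]
  rw [if_neg (c := k = 0) (by omega), if_neg (c := k = m + d + d) (by omega),
    if_neg (c := k = m + d + m) (by omega), if_neg (c := k = m + d + (m + d)) (by omega)]
  simp only [add_zero, add_comm m d, add_left_inj]

section MulMirror

variable {P : ℤ[X]} (hm : 0 < m) (hmn : m < n) (hε₂ : ε₂ = 1 ∨ ε₂ = -1)
  (hP : P * P.mirror = trinomial 0 m n (4 * ε₂) ε₁ 1 * (trinomial 0 m n (4 * ε₂) ε₁ 1).mirror)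

include hm hmn hP

lemma natDegree_eq_of_mul_mirror_eq : P.natDegree = n := by
  have h := congrArg natDegree hP
  rw [natDegree_mul_mirror, natDegree_mul_mirror, trinomial_natDegree hm hmn one_ne_zero] at h
  omega

include hε₂

lemma coeff_zero_mirror_of_mul_mirror_eq (h₀ : P.coeff 0 = 2) : P.mirror.coeff 0 = 2 * ε₂ := by
  have h := congrArg (coeff · 0) hP
  have hu : 4 * ε₂ ≠ 0 := by omega
  simp only [mul_coeff_zero, h₀] at h
  rw [trinomial_mirror hm hmn hu one_ne_zero, trinomial_trailing_coeff' hm hmn,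
    trinomial_trailing_coeff' (by omega) (by omega)] at h
  omega

end MulMirror

lemma reciprocalSystem_reciprocalPair {r : ℕ} {P : ℤ[X]} (hε₁ : ε₁ = 1 ∨ ε₁ = -1)
    (hε₂ : ε₂ = 1 ∨ ε₂ = -1) (hr : 0 < r) (hrn : 2 * r < n)
    (hP : P * P.mirror = trinomial 0 (2 * r) n (4 * ε₂) ε₁ 1
      * (trinomial 0 (2 * r) n (4 * ε₂) ε₁ 1).mirror)
    (h₀ : P.coeff 0 = 2) (hord : HasOddOrder P r) (hodd : ¬ 2 ∣ P.mirror.coeff r) :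
    ReciprocalSystem n r (ε₁ * ε₂) ε₁ (reciprocalPair P ε₂) := by
  have hm : 0 < 2 * r := by omega
  have hε₂0 : 4 * ε₂ ≠ 0 := by omega
  have hsq₁ : ε₁ ^ 2 = 1 := by rcases hε₁ with rfl | rfl <;> rfl
  have hsq₂ : ε₂ ^ 2 = 1 := by rcases hε₂ with rfl | rfl <;> rfl
  have hsign : ε₁ * ε₂ * ε₁ = ε₂ := by linear_combination ε₂ * hsq₁
  have hcoeff {p : ℕ} := coeff_trinomial_mul_mirror (v := ε₁) hε₂0 one_ne_zero hm hrn (k := p)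
  obtain rfl := natDegree_eq_of_mul_mirror_eq hm hrn hP
  have hP0 : P.coeff 0 ≠ 0 := h₀ ▸ two_ne_zero
  have hn := coeff_zero_mirror_of_mul_mirror_eq hm hrn hε₂ hP h₀
  have hzero : reciprocalPair P ε₂ 0 = (4, 0) := by
    rw [reciprocalPair, h₀, hn, Prod.mk.injEq]
    exact ⟨by linear_combination 2 * hsq₂, by linear_combination -2 * hsq₂⟩
  refine ⟨hr, hrn, ?_, hε₁, hzero, fun hjk => ?_, fun hjk => ?_, fun {p} hp hpn => ?_, ?_,
    fun k => ?_, fun {p} _ hpr => ?_, ?_, ?_⟩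
  · exact Int.isUnit_iff.1 ((Int.isUnit_iff.2 hε₁).mul (Int.isUnit_iff.2 hε₂))
  · rw [hsign, fst_reciprocalPair_mirror hP0 hsq₂ hjk]
  · rw [hsign, snd_reciprocalPair_mirror hP0 hsq₂ hjk]
  · rw [eight_mul_fst_reciprocalPair hzero hp, hP, hcoeff hp hpn.le, if_neg hpn.ne]
    rcases hε₂ with rfl | rfl <;> split_ifs <;> ring
  · rw [sum_Ioo_weight_reciprocalPair hP0 hsq₂ (by omega), hP, hcoeff (by omega) le_rfl,
      if_pos rfl, if_neg (by omega), if_neg (by omega), hzero, weight]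
    linear_combination 4 * hsq₁ + 64 * hsq₂
  · exact ⟨P.coeff k, by rw [reciprocalPair]; ring⟩
  · obtain ⟨c, hc⟩ := hord.1 p hpr
    exact ⟨c, by rw [reciprocalPair, hc]; ring⟩
  · rw [reciprocalPair]
    have := hord.2
    rcases hε₂ with rfl | rfl <;> omega
  · rw [reciprocalPair]
    have := hord.2
    omega

lemma hasOddOrder_trinomial (hε₁ : ε₁ = 1 ∨ ε₁ = -1) (hm : 0 < m) (hmn : m < n) :
    HasOddOrder (trinomial 0 m n (4 * ε₂) ε₁ 1) m := by
  refine ⟨fun i hi => ?_, ?_⟩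
  · rcases i.eq_zero_or_pos with rfl | hpos
    · rw [trinomial_trailing_coeff' hm hmn]
      omega
    · rw [coeff_trinomial_eq_zero hpos hi hmn]
      exact dvd_zero 2
  · rw [trinomial_middle_coeff hm hmn]
    omega

lemma exists_hasOddOrder_of_mul_eq_trinomial (hε₁ : ε₁ = 1 ∨ ε₁ = -1) (hm : 0 < m) (hmn : m < n)
    {g h : ℤ[X]} (hg : g.Monic) (hh : h.Monic)
    (hgh : g * h = trinomial 0 m n (4 * ε₂) ε₁ 1) (hg₂ : 2 ∣ g.coeff 0) (hg₄ : ¬ 4 ∣ g.coeff 0)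
    (hh₂ : 2 ∣ h.coeff 0) (hh₄ : ¬ 4 ∣ h.coeff 0) :
    ∃ r, m = 2 * r ∧ HasOddOrder g r ∧ HasOddOrder h r := by
  obtain ⟨a, ha⟩ := exists_hasOddOrder_of_monic hg
  obtain ⟨b, hb⟩ := exists_hasOddOrder_of_monic hh
  have hapos := ha.pos hg₂
  have hbpos := hb.pos hh₂
  have hm_eq : m = a + b := (hasOddOrder_trinomial hε₁ hm hmn).unique (hgh ▸ ha.mul hb)
  have hcoeff {k : ℕ} (h₀ : 0 < k) (hk : k < m) : 4 ∣ (g * h).coeff k := by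
    rw [hgh, coeff_trinomial_eq_zero h₀ hk hmn]
    exact dvd_zero 4
  rcases lt_trichotomy a b with hab | rfl | hba
  · exact absurd (ha.four_dvd_coeff_zero hb hab (hcoeff hapos (by omega))) hh₄
  · exact ⟨a, by omega, ha, hb⟩
  · exact absurd (hb.four_dvd_coeff_zero ha hba (mul_comm g h ▸ hcoeff hbpos (by omega))) hg₄

lemma hasOddOrder_C_mul_mul_mirror {s : ℤ} (hs : s = 1 ∨ s = -1) {g h : ℤ[X]} {r : ℕ}
    (hg : HasOddOrder g r) (hh : h.Monic) (hh₀ : h.coeff 0 ≠ 0) :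
    HasOddOrder (C s * g * h.mirror) r := by
  have hC : HasOddOrder (C s) 0 := hasOddOrder_of_not_two_dvd (by rw [coeff_C_zero]; omega)
  have hmirror : HasOddOrder h.mirror 0 := hasOddOrder_of_not_two_dvd (by
    rw [coeff_mirror_of_add_eq hh₀ (zero_add _), hh.coeff_natDegree]
    decide)
  simpa only [zero_add, add_zero] using (hC.mul hg).mul hmirror

lemma exists_reciprocalSystem (hε₁ : ε₁ = 1 ∨ ε₁ = -1) (hε₂ : ε₂ = 1 ∨ ε₂ = -1)
    (hm : 0 < m) (hmn : m < n) {g h : ℤ[X]} (hg : g.Monic) (hh : h.Monic)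
    (hdg : 0 < g.natDegree) (hdh : 0 < h.natDegree)
    (hgh : g * h = trinomial 0 m n (4 * ε₂) ε₁ 1) :
    ∃ r z, m = 2 * r ∧ ReciprocalSystem n r (ε₁ * ε₂) ε₁ z := by
  obtain ⟨s, hs, hg₀, hh₀⟩ := exists_sign_coeff_zero hε₁ hε₂ hm hmn hg hh hdg hdh hgh
  have hsε₂ : s * ε₂ = 1 ∨ s * ε₂ = -1 :=
    Int.isUnit_iff.1 ((Int.isUnit_iff.2 hs).mul (Int.isUnit_iff.2 hε₂))
  obtain ⟨r, rfl, hgr, hhr⟩ := exists_hasOddOrder_of_mul_eq_trinomial hε₁ hm hmn hg hh hgh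
    (by omega) (by omega) (by omega) (by omega)
  have hsq : C s * C s = 1 := by rcases hs with rfl | rfl <;> simp
  have hmirror : (C s * g * h.mirror).mirror = C s * h * g.mirror := by
    rw [mirror_mul_of_domain, mirror_mul_of_domain, mirror_C, mirror_mirror]
    ring
  refine ⟨r, _, rfl, reciprocalSystem_reciprocalPair (P := C s * g * h.mirror) hε₁ hε₂ (by omega)
    hmn ?_ ?_ (hasOddOrder_C_mul_mul_mirror hs hgr hh (by omega)) ?_⟩
  · rw [hmirror, ← hgh, mirror_mul_of_domain]
    linear_combination (g * h * (g.mirror * h.mirror)) * hsq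
  · rw [mul_coeff_zero, mul_coeff_zero, coeff_C_zero, hg₀,
      coeff_mirror_of_add_eq (by omega) (zero_add _), hh.coeff_natDegree]
    rcases hs with rfl | rfl <;> rfl
  · rw [hmirror]
    exact (hasOddOrder_C_mul_mul_mirror hs hhr hg (by omega)).2

end Trinomial

/-- Jonassen's theorem: `X^n + ε₁X^m + 4ε₂` is irreducible outside three
exceptional families. -/
theorem jonassen_trinomial (n m : ℕ) (hm : 1 ≤ m) (hmn : m < n)
    (ε₁ ε₂ : ℤ) (hε₁ : ε₁ = 1 ∨ ε₁ = -1) (hε₂ : ε₂ = 1 ∨ ε₂ = -1)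
    (hexc : ¬ ∃ k : ℕ, 0 < k ∧
      ((n = 3 * k ∧ m = 2 * k ∧ ε₂ = ε₁) ∨
       (n = 5 * k ∧ m = 2 * k ∧ ε₂ = -ε₁) ∨
       (n = 11 * k ∧ m = 4 * k ∧ ε₂ = ε₁))) :
    Irreducible ((X : Polynomial ℤ) ^ n + C ε₁ * X ^ m + C (4 * ε₂)) := by
  have hf : (X : ℤ[X]) ^ n + C ε₁ * X ^ m + C (4 * ε₂) = trinomial 0 m n (4 * ε₂) ε₁ 1 := by
    rw [trinomial_def, pow_zero, mul_one, C_1, one_mul]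
    ring
  have hdeg : (trinomial 0 m n (4 * ε₂) ε₁ 1).natDegree = n :=
    trinomial_natDegree hm hmn one_ne_zero
  have hmonic : (trinomial 0 m n (4 * ε₂) ε₁ 1).Monic := trinomial_monic hm hmn
  rw [hf, hmonic.irreducible_iff_natDegree']
  refine ⟨fun h₁ => by rw [h₁, natDegree_one] at hdeg; omega, fun g h hg hh hgh hmem => hexc ?_⟩
  rw [Finset.mem_Ioc, hdeg] at hmem
  have hadd := hg.natDegree_mul hh
  rw [hgh, hdeg] at hadd
  obtain ⟨r, z, rfl, hsys⟩ :=
    exists_reciprocalSystem hε₁ hε₂ hm hmn hg hh (by omega) hmem.1 hgh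
  rcases hsys.eq_mul with ⟨hn | hn, hε⟩ | ⟨hn, hε⟩
  · exact ⟨r, by omega, .inl ⟨hn, rfl, (Int.eq_of_mul_eq_one hε).symm⟩⟩
  · exact ⟨r / 2, by omega, .inr (.inr ⟨by omega, by omega, (Int.eq_of_mul_eq_one hε).symm⟩)⟩
  · exact ⟨r, by omega, .inr (.inl ⟨hn, rfl, by rcases hε₁ with rfl | rfl <;> omega⟩)⟩
end

section
/- Let n > m ≥ 1 be integers, d = gcd(n, m), and let b, c be nonzero integers. Let f(X) = X^n + bX^m + c ∈ ℂ[X] and let f′ be its derivative. Then the product of f′(α) over the complex roots α of f, counted with multiplicity, equals c^{m−1}·( n^{n/d}·c^{(n−m)/d} − (−1)^{n/d}·(n−m)^{(n−m)/d}·m^{m/d}·b^{n/d} )^d. Equivalently, the discriminant of f, D = (−1)^{n(n−1)/2}·∏_α f′(α), equals (−1)^{n(n−1)/2}·c^{m−1}·( n^{n/d}·c^{(n−m)/d} − (−1)^{n/d}·(n−m)^{(n−m)/d}·m^{m/d}·b^{n/d} )^d. -/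
open Polynomial

/-!
Write `f = X ^ n + b X ^ m + c`. The product of `f'` over the roots of `f` is `Res(f, f')`, and
`n f - X f' = (n - m) b X ^ m + n c`, so that `c Res(f, f') = Res(f, (n - m) b X ^ m + n c)`.
Subtracting a multiple of the second argument from `f` turns the right-hand side into a resultant of
two binomials in `X ^ m` and `X ^ n`. Both are polynomials in `X ^ d`, which accounts for the `d`-th
power; for coprime exponents the roots of one binomial are the `ζ ^ i β` with `ζ` a primitive root
of unity, and raising to the exponent of the other merely permutes the `ζ ^ i`.

The divisions by `c` and by `(n - m) b`, and the primitive root of unity, are available in an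
algebraically closed field of characteristic zero. This is enough for any commutative ring, since
both sides are polynomials in `b` and `c` with integer coefficients.
-/

section Universality

universe u

theorem eq_of_forall_isAlgClosed_charZero (F G : ∀ {R : Type u} [CommRing R], R → R → R)
    (map_F : ∀ {R S : Type u} [CommRing R] [CommRing S] (φ : R →+* S) (x y : R),
      φ (F x y) = F (φ x) (φ y))
    (map_G : ∀ {R S : Type u} [CommRing R] [CommRing S] (φ : R →+* S) (x y : R),
      φ (G x y) = G (φ x) (φ y))
    (h : ∀ {K : Type u} [Field K] [IsAlgClosed K] [CharZero K] {x y : K},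
      x ≠ 0 → y ≠ 0 → F x y = G x y)
    {R : Type u} [CommRing R] (x y : R) : F x y = G x y := by
  let S := MvPolynomial R ℤ
  let L := FractionRing S
  let K := AlgebraicClosure L
  have : CharZero L := IsFractionRing.charZero S
  have : CharZero K := charZero_of_injective_algebraMap (algebraMap L K).injective
  let ι : S →+* K := (algebraMap L K).comp (algebraMap S L)
  have hι : Function.Injective ι := (algebraMap L K).injective.comp (IsFractionRing.injective S L)
  have ι_X_ne_zero (r : R) : ι (.X r) ≠ 0 := (map_ne_zero_iff ι hι).2 (MvPolynomial.X_ne_zero r)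
  have generic : F (.X x : S) (.X y) = G (.X x) (.X y) :=
    hι <| by rw [map_F, map_G, h (ι_X_ne_zero x) (ι_X_ne_zero y)]
  simpa [map_F, map_G] using congrArg (MvPolynomial.eval₂Hom (Int.castRingHom R) id) generic

end Universality

section Resultant

variable {R : Type*} [CommRing R]

theorem resultant_X_pow_sub_C_expand (d : ℕ) (a : R) {g : R[X]} {n : ℕ} (hg : g.natDegree ≤ n) :
    resultant (X ^ d - C a) (expand R d g) d (n * d) = g.eval a ^ d := by
  nontriviality R
  rcases g.natDegree.eq_zero_or_pos with hg₀ | hg₀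
  · obtain ⟨r, rfl⟩ := natDegree_eq_zero.mp hg₀
    rw [expand_C, resultant_C_right, eval_C]
    cases d <;> simp
  have division : expand R d g =
      C (g.eval a) + (X ^ d - C a) * expand R d (g /ₘ (X - C a)) := by
    conv_lhs => rw [← g.modByMonic_add_div (X - C a), modByMonic_X_sub_C_eq_C_eval]
    simp only [map_add, map_mul, map_sub, expand_C, expand_X]
  have hq : (expand R d (g /ₘ (X - C a))).natDegree + d ≤ n * d := by
    rw [natDegree_expand, natDegree_divByMonic g (monic_X_sub_C a), natDegree_X_sub_C,
      ← Nat.succ_mul]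
    exact Nat.mul_le_mul_right d (by lia)
  rw [division, resultant_add_mul_right _ _ _ _ _ hq natDegree_X_pow_sub_C.le, resultant_C_right]
  cases d <;> simp

theorem resultant_expand_of_splits [IsDomain R] (d : ℕ) {f g : R[X]} {n : ℕ} (hf : f.Splits)
    (hf' : f.Monic) (hg : g.natDegree ≤ n) :
    resultant (expand R d f) (expand R d g) (f.natDegree * d) (n * d) =
      resultant f g f.natDegree n ^ d := by
  rw [resultant_eq_prod_eval f g n hg hf, hf'.leadingCoeff, one_pow, one_mul,
    hf.natDegree_eq_card_roots]
  nth_rw 1 [hf.eq_prod_roots_of_monic hf']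
  have hgd : (expand R d g).natDegree ≤ n * d := by
    rw [natDegree_expand]
    exact Nat.mul_le_mul_right d hg
  induction f.roots using Multiset.induction with
  | empty => simp
  | cons a s ih =>
    have mul_left :=
      resultant_mul_left (X ^ d - C a) (expand R d (s.map (X - C ·)).prod) _ _ hgd
    rw [natDegree_X_pow_sub_C, natDegree_expand, natDegree_multiset_prod_X_sub_C_eq_card, ih,
      resultant_X_pow_sub_C_expand d a hg] at mul_left
    rw [Multiset.map_cons, Multiset.prod_cons, map_mul, map_sub, expand_X, expand_C,
      Multiset.card_cons, add_one_mul, add_comm, mul_left, Multiset.map_cons, Multiset.prod_cons,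
      mul_pow]

theorem resultant_of_monic_of_natDegree_le {f g : R[X]} {n k : ℕ} (hf : f.Monic)
    (hn : f.natDegree = n) (hg : g.natDegree ≤ k) : resultant f g n k = resultant f g := by
  subst hn
  obtain ⟨j, rfl⟩ := Nat.exists_eq_add_of_le hg
  rw [resultant_add_right_deg _ _ _ _ _ le_rfl, hf.coeff_natDegree, one_pow, one_mul]

theorem resultant_X_mul_of_monic {f : R[X]} (hf : f.Monic) (g : R[X]) :
    resultant f (X * g) = (-1) ^ f.natDegree * f.coeff 0 * resultant f g := by
  nontriviality R
  have resultant_X : resultant f X = (-1) ^ f.natDegree * f.coeff 0 := by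
    rw [natDegree_X, ← pow_one X, resultant_X_pow_right f _ 1 le_rfl, mul_one, pow_one]
  rw [← resultant_X, ← resultant_mul_right f X g _ le_rfl,
    resultant_of_monic_of_natDegree_le hf rfl natDegree_mul_le]

theorem prod_roots_eval_derivative_of_monic [IsDomain R] {f : R[X]} (hf : f.Splits)
    (hf' : f.Monic) :
    (f.roots.map (f.derivative.eval ·)).prod =
      resultant f (derivative f) f.natDegree (f.natDegree - 1) := by
  rw [resultant_eq_prod_eval f (derivative f) _ (natDegree_derivative_le f) hf, hf'.leadingCoeff,
    one_pow, one_mul]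

theorem coeff_zero_mul_resultant_derivative {f : R[X]} (hf : f.Monic) :
    f.coeff 0 * resultant f (derivative f) =
      resultant f (C (f.natDegree : R) * f - X * derivative f) := by
  set n := f.natDegree with hn
  have hXf' : (X * derivative f).natDegree ≤ n := by
    rcases n.eq_zero_or_pos with hn₀ | hn₀
    · rw [derivative_of_natDegree_zero hn₀, mul_zero, natDegree_zero]
      exact n.zero_le
    · grw [natDegree_mul_le, natDegree_X_le, natDegree_derivative_le]
      lia
  have hg : (C (n : R) * f - X * derivative f).natDegree ≤ n :=
    (natDegree_sub_le _ _).trans (max_le (natDegree_C_mul_le _ _) hXf')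
  have hX : X * derivative f = C (-1) * (C (n : R) * f - X * derivative f) + f * C (n : R) := by
    simp only [C_neg, C_1]
    ring
  refine (isUnit_one.neg.pow n).mul_left_cancel ?_
  calc (-1) ^ n * (f.coeff 0 * resultant f (derivative f))
      = resultant f (X * derivative f) n n := by
        rw [resultant_of_monic_of_natDegree_le hf rfl hXf', resultant_X_mul_of_monic hf, mul_assoc]
    _ = (-1) ^ n * resultant f (C (n : R) * f - X * derivative f) n n := by
        conv_lhs => rw [hX]
        rw [resultant_add_mul_right _ _ _ _ _ (by simp [hn]) le_rfl, resultant_C_mul_right]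
    _ = (-1) ^ n * resultant f (C (n : R) * f - X * derivative f) := by
        rw [resultant_of_monic_of_natDegree_le hf rfl hg]

end Resultant

section Binomial

theorem prod_range_pow_add_of_coprime {R : Type*} [CommRing R] [IsDomain R] {ζ : R} {n m : ℕ}
    (hζ : IsPrimitiveRoot ζ n) (hn : 0 < n) (hmn : m.Coprime n) (β t : R) :
    ∏ i ∈ Finset.range n, ((ζ ^ i * β) ^ m + t) = t ^ n - (-β ^ m) ^ n := by
  have factor : t ^ n - (-β ^ m) ^ n = ∏ i ∈ Finset.range n, (t - (ζ ^ m) ^ i * -β ^ m) := by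
    simpa [eval_prod] using congrArg (eval t)
      (X_pow_sub_C_eq_prod (hζ.pow_of_coprime m hmn) hn (α := -β ^ m) rfl)
  rw [factor]
  exact Finset.prod_congr rfl fun i _ ↦ by ring

theorem resultant_X_pow_add_C_of_coprime {K : Type*} [Field K] [IsAlgClosed K] [CharZero K]
    {n m : ℕ} (hn : 0 < n) (hmn : m.Coprime n) (s t : K) :
    resultant (X ^ n + C s) (X ^ m + C t) n m = t ^ n - (-1) ^ (n + m) * s ^ m := by
  have : NeZero (n : K) := ⟨Nat.cast_ne_zero.2 hn.ne'⟩
  obtain ⟨ζ, hζ⟩ := HasEnoughRootsOfUnity.exists_primitiveRoot K n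
  obtain ⟨β, hβ⟩ := IsAlgClosed.exists_pow_nat_eq (-s) hn
  have factor : X ^ n + C s = ∏ i ∈ Finset.range n, (X - C (ζ ^ i * β)) := by
    rw [← X_pow_sub_C_eq_prod hζ hn hβ, C_neg, sub_neg_eq_add]
  have leadingCoeff_ne_zero :
      ∏ i ∈ Finset.range n, (X - C (ζ ^ i * β)).leadingCoeff ≠ 0 := by
    simp only [leadingCoeff_X_sub_C, Finset.prod_const_one, ne_eq, one_ne_zero, not_false_eq_true]
  calc resultant (X ^ n + C s) (X ^ m + C t) n m
      = ∏ i ∈ Finset.range n, ((ζ ^ i * β) ^ m + t) := by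
        have := resultant_prod_left _ _ (X ^ m + C t) m leadingCoeff_ne_zero
          natDegree_X_pow_add_C.le
        rw [← factor, natDegree_X_pow_add_C] at this
        simpa only [natDegree_X_sub_C, natDegree_X_pow_add_C, le_refl, resultant_X_sub_C_left,
          eval_add, eval_pow, eval_X, eval_C] using this
    _ = t ^ n - (-β ^ m) ^ n := prod_range_pow_add_of_coprime hζ hn hmn β t
    _ = t ^ n - (-1) ^ (n + m) * s ^ m := by
        rw [neg_pow, ← pow_mul, mul_comm m, pow_mul, hβ, neg_pow s, ← mul_assoc, ← pow_add]

variable {R : Type*} [CommRing R]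

theorem resultant_X_pow_add_C_X_pow_add_C (d : ℕ) {n m : ℕ} (hn : 0 < n) (hmn : m.Coprime n)
    (s t : R) :
    resultant (X ^ (n * d) + C s) (X ^ (m * d) + C t) (n * d) (m * d) =
      (t ^ n - (-1) ^ (n + m) * s ^ m) ^ d := by
  refine eq_of_forall_isAlgClosed_charZero
    (fun s t ↦ resultant (X ^ (n * d) + C s) (X ^ (m * d) + C t) (n * d) (m * d))
    (fun s t ↦ (t ^ n - (-1) ^ (n + m) * s ^ m) ^ d) (fun φ s t ↦ ?_) (fun φ s t ↦ ?_)
    (fun {K} _ _ _ s t _ _ ↦ ?_) s t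
  · rw [← resultant_map_map]
    congr! 1 <;> simp
  · simp
  · have expand_binomial (k : ℕ) (r : K) : expand K d (X ^ k + C r) = X ^ (k * d) + C r := by
      simp [← pow_mul, mul_comm]
    have := resultant_expand_of_splits d (IsAlgClosed.splits (X ^ n + C s))
      (monic_X_pow_add_C s hn.ne') (natDegree_X_pow_add_C (n := m) (r := t)).le
    rwa [natDegree_X_pow_add_C, resultant_X_pow_add_C_of_coprime hn hmn, expand_binomial,
      expand_binomial] at this

end Binomial

section Trinomial

theorem resultant_trinomial_X_pow_add_C {R : Type*} [CommRing R] (d : ℕ) {n m : ℕ} (hn : 0 < n)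
    (hmn : m ≤ n) (hcop : m.Coprime n) (b c t : R) :
    resultant (trinomial 0 (m * d) (n * d) c b 1) (X ^ (m * d) + C t) (n * d) (m * d) =
      (t ^ n - (-1) ^ (n + m) * (c - b * t) ^ m) ^ d := by
  nontriviality R
  have reduction : trinomial 0 (m * d) (n * d) c b 1 =
      (X ^ (n * d) + C (c - b * t)) + (X ^ (m * d) + C t) * C b := by
    simp only [trinomial_def, C_sub, C_mul, C_1]
    ring
  have hdeg : (C b).natDegree + m * d ≤ n * d := by
    simpa using Nat.mul_le_mul_right d hmn
  rw [reduction, resultant_add_mul_left _ _ _ _ _ hdeg natDegree_X_pow_add_C.le,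
    resultant_X_pow_add_C_X_pow_add_C d hn hcop]

theorem resultant_trinomial_C_mul_X_pow_add_C {K : Type*} [Field K] (d : ℕ) {k m : ℕ}
    (hkm : 0 < k + m) (hcop : m.Coprime (k + m)) {a : K} (ha : a ≠ 0) (b c e : K) :
    resultant (trinomial 0 (m * d) ((k + m) * d) c b 1) (C a * X ^ (m * d) + C e)
        ((k + m) * d) (m * d) =
      (e ^ (k + m) - (-1) ^ (k + m) * a ^ k * (b * e - a * c) ^ m) ^ d := by
  have factor : C a * X ^ (m * d) + C e = C a * (X ^ (m * d) + C (e / a)) := by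
    rw [mul_add, ← C_mul, mul_div_cancel₀ _ ha]
  have homogenize : a ^ (k + m) * ((e / a) ^ (k + m) - (-1) ^ (k + m + m) * (c - b * (e / a)) ^ m) =
      e ^ (k + m) - (-1) ^ (k + m) * a ^ k * (b * e - a * c) ^ m := by
    have h : b * e - a * c = -a * (c - b * (e / a)) := by
      field_simp
      ring
    rw [h, mul_sub, ← mul_pow, mul_div_cancel₀ _ ha, mul_pow, neg_pow a]
    ring
  rw [factor, resultant_C_mul_right, resultant_trinomial_X_pow_add_C d hkm le_add_self hcop,
    pow_mul, ← mul_pow, homogenize]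

variable {R : Type*} [CommRing R]

theorem C_mul_trinomial_sub_X_mul_derivative {m n : ℕ} (hmn : m ≤ n) (b c : R) :
    C (n : R) * trinomial 0 m n c b 1 - X * derivative (trinomial 0 m n c b 1) =
      C ((n - m : ℕ) * b) * X ^ m + C (n * c) := by
  have euler (k : ℕ) : (X : R[X]) * derivative (X ^ k) = C (k : R) * X ^ k := by
    cases k
    · simp
    · rw [derivative_X_pow, Nat.add_sub_cancel, pow_succ]
      ring
  simp only [trinomial_def, derivative_add, derivative_C_mul, C_mul, Nat.cast_sub hmn, C_sub,
    C_1, one_mul, pow_zero, derivative_one]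
  linear_combination -euler n - C b * euler m

theorem mul_resultant_trinomial_derivative {m n : ℕ} (hm : 0 < m) (hmn : m < n) (b c : R) :
    c * resultant (trinomial 0 m n c b 1) (derivative (trinomial 0 m n c b 1)) n (n - 1) =
      resultant (trinomial 0 m n c b 1) (C ((n - m : ℕ) * b) * X ^ m + C (n * c)) n m := by
  nontriviality R
  have hf : (trinomial 0 m n c b 1).Monic := trinomial_monic hm hmn
  have hn : (trinomial 0 m n c b 1).natDegree = n := trinomial_natDegree hm hmn one_ne_zero
  have hf' : (derivative (trinomial 0 m n c b 1)).natDegree ≤ n - 1 :=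
    (natDegree_derivative_le _).trans_eq (by rw [hn])
  have hg : (C ((n - m : ℕ) * b) * X ^ m + C (n * c)).natDegree ≤ m := by compute_degree
  have key := coeff_zero_mul_resultant_derivative hf
  rwa [trinomial_trailing_coeff' hm hmn, congrArg (Nat.cast (R := R)) hn,
    C_mul_trinomial_sub_X_mul_derivative hmn.le, ← resultant_of_monic_of_natDegree_le hf hn hf',
    ← resultant_of_monic_of_natDegree_le hf hn hg] at key

theorem resultant_trinomial_derivative {d k m : ℕ} (hd : 0 < d) (hk : 0 < k) (hm : 0 < m)
    (hcop : m.Coprime (k + m)) (b c : R) :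
    resultant (trinomial 0 (m * d) ((k + m) * d) c b 1)
        (derivative (trinomial 0 (m * d) ((k + m) * d) c b 1)) ((k + m) * d) ((k + m) * d - 1) =
      c ^ (m * d - 1) *
        ((((k + m) * d : ℕ) : R) ^ (k + m) * c ^ k -
          (-1) ^ (k + m) * ((k * d : ℕ) : R) ^ k * ((m * d : ℕ) : R) ^ m * b ^ (k + m)) ^ d := by
  refine eq_of_forall_isAlgClosed_charZero
    (fun b c ↦ resultant (trinomial 0 (m * d) ((k + m) * d) c b 1)
      (derivative (trinomial 0 (m * d) ((k + m) * d) c b 1)) ((k + m) * d) ((k + m) * d - 1))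
    (fun {R} _ b c ↦ c ^ (m * d - 1) * ((((k + m) * d : ℕ) : R) ^ (k + m) * c ^ k -
      (-1) ^ (k + m) * ((k * d : ℕ) : R) ^ k * ((m * d : ℕ) : R) ^ m * b ^ (k + m)) ^ d)
    (fun φ b c ↦ ?_) (fun φ b c ↦ ?_) (fun {K} _ _ _ b c hb hc ↦ ?_) b c
  · have map_trinomial (p q : ℕ) :
        (trinomial 0 p q c b 1).map φ = trinomial 0 p q (φ c) (φ b) 1 := by
      simp [trinomial_def]
    rw [← resultant_map_map, ← derivative_map, map_trinomial]
  · simp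
  · have hmd : 0 < m * d := by positivity
    have hlt : m * d < (k + m) * d := Nat.mul_lt_mul_of_pos_right (by lia) hd
    have ha : ((k * d : ℕ) : K) * b ≠ 0 :=
      mul_ne_zero (Nat.cast_ne_zero.2 (by positivity)) hb
    apply mul_left_cancel₀ hc
    rw [mul_resultant_trinomial_derivative hmd hlt, ← Nat.sub_mul, Nat.add_sub_cancel,
      resultant_trinomial_C_mul_X_pow_add_C d (by lia) hcop ha,
      ← mul_assoc c (c ^ (m * d - 1)), ← pow_succ', Nat.sub_add_cancel hmd, pow_mul, ← mul_pow]
    have cancel : b * (((k + m) * d : ℕ) * c) - (k * d : ℕ) * b * c = (m * d : ℕ) * (b * c) := by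
      push_cast
      ring
    rw [cancel]
    congr 1
    simp only [mul_pow]
    ring

end Trinomial

theorem greenfield_drucker_discriminant_general {R : Type*} [CommRing R] [IsDomain R] {n m : ℕ}
    (hm : 1 ≤ m) (hmn : m < n) (b c : R) (hf : (X ^ n + C b * X ^ m + C c).Splits) {d : ℕ}
    (hd : d = Nat.gcd n m) :
    (((X ^ n + C b * X ^ m + C c).roots).map
        (fun α => (X ^ n + C b * X ^ m + C c).derivative.eval α)).prod =
      c ^ (m - 1) *
        ((n : R) ^ (n / d) * c ^ ((n - m) / d) -
          (-1 : R) ^ (n / d) * ((n - m : ℕ) : R) ^ ((n - m) / d) *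
            (m : R) ^ (m / d) * b ^ (n / d)) ^ d ∧
    (-1 : R) ^ (n * (n - 1) / 2) *
      (((X ^ n + C b * X ^ m + C c).roots).map
        (fun α => (X ^ n + C b * X ^ m + C c).derivative.eval α)).prod =
      (-1 : R) ^ (n * (n - 1) / 2) * c ^ (m - 1) *
        ((n : R) ^ (n / d) * c ^ ((n - m) / d) -
          (-1 : R) ^ (n / d) * ((n - m : ℕ) : R) ^ ((n - m) / d) *
            (m : R) ^ (m / d) * b ^ (n / d)) ^ d := by
  have hd₀ : 0 < d := hd ▸ Nat.gcd_pos_of_pos_right n hm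
  obtain ⟨n', m', hcop, hn', hm'⟩ := Nat.exists_coprime n m
  rw [← hd] at hn' hm'
  subst hn' hm'
  have hlt : m' < n' := Nat.lt_of_mul_lt_mul_right hmn
  obtain ⟨k, rfl⟩ := Nat.exists_eq_add_of_le' hlt.le
  have hm₀ : 0 < m' := Nat.pos_of_mul_pos_right hm
  have trinomial_eq : X ^ ((k + m') * d) + C b * X ^ (m' * d) + C c =
      trinomial 0 (m' * d) ((k + m') * d) c b 1 := by
    simp only [trinomial_def, C_1]
    ring
  rw [trinomial_eq] at hf ⊢
  rw [prod_roots_eval_derivative_of_monic hf (trinomial_monic hm hmn),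
    trinomial_natDegree hm hmn one_ne_zero,
    resultant_trinomial_derivative hd₀ (by lia) hm₀ hcop.symm, ← Nat.sub_mul, Nat.add_sub_cancel,
    Nat.mul_div_cancel _ hd₀, Nat.mul_div_cancel _ hd₀, Nat.mul_div_cancel _ hd₀]
  exact ⟨rfl, (mul_assoc _ _ _).symm⟩

/-- The Greenfield–Drucker discriminant formula for the trinomial `X^n + bX^m + c`:
the product of `f'(α)` over the complex roots `α` of `f` (with multiplicity), and
the resulting formula for the discriminant `D = (-1)^{n(n-1)/2} ∏ f'(α)`. -/
theorem greenfield_drucker_discriminant (n m : ℕ) (hm : 1 ≤ m) (hmn : m < n)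
    (b c : ℤ) (hb : b ≠ 0) (hc : c ≠ 0) (d : ℕ) (hd : d = Nat.gcd n m) :
    (((X ^ n + C (b : ℂ) * X ^ m + C (c : ℂ)).roots).map
        (fun α => (X ^ n + C (b : ℂ) * X ^ m + C (c : ℂ)).derivative.eval α)).prod =
      (c : ℂ) ^ (m - 1) *
        ((n : ℂ) ^ (n / d) * (c : ℂ) ^ ((n - m) / d) -
          (-1 : ℂ) ^ (n / d) * ((n - m : ℕ) : ℂ) ^ ((n - m) / d) *
            (m : ℂ) ^ (m / d) * (b : ℂ) ^ (n / d)) ^ d ∧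
    (-1 : ℂ) ^ (n * (n - 1) / 2) *
      (((X ^ n + C (b : ℂ) * X ^ m + C (c : ℂ)).roots).map
        (fun α => (X ^ n + C (b : ℂ) * X ^ m + C (c : ℂ)).derivative.eval α)).prod =
      (-1 : ℂ) ^ (n * (n - 1) / 2) * (c : ℂ) ^ (m - 1) *
        ((n : ℂ) ^ (n / d) * (c : ℂ) ^ ((n - m) / d) -
          (-1 : ℂ) ^ (n / d) * ((n - m : ℕ) : ℂ) ^ ((n - m) / d) *
            (m : ℂ) ^ (m / d) * (b : ℂ) ^ (n / d)) ^ d :=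
  greenfield_drucker_discriminant_general hm hmn (b : ℂ) (c : ℂ) (IsAlgClosed.splits _) hd
end
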